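/- arXiv:1612.06092 — 11 statements merged into one kernel-verified Lean document; each statement's English description precedes it below -/
import Mathlib

section
/- Decomposition of nondeterministic ordered read-k-times branching programs (Lemma 1): Let k ≥ 1, w ≥ 1 and let f : {0,1}^n → {0,1} be computed by a k-NOBDD of width w with order θ. Then there exist an integer d with 1 ≤ d ≤ w^{k−1} and Boolean functions g_{j,i} : {0,1}^n → {0,1} for 1 ≤ j ≤ d, 1 ≤ i ≤ k, each computed by some NOBDD of width w with the same order θ, such that for every input ν ∈ {0,1}^n, f(ν) = ⋁_{j=1}^{d} ⋀_{i=1}^{k} g_{j,i}(ν). -/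
/-- The variable index read at level `m` of a `k`-layer ordered BDD with order `θ`. -/
def varIdx {n : ℕ} (k : ℕ) (θ : Equiv.Perm (Fin n)) (m : Fin (k * n)) : Fin n :=
  θ ⟨m.val % n, Nat.mod_lt _ (Nat.pos_of_ne_zero (fun h => absurd m.isLt (by subst h; simp)))⟩

/-- A nondeterministic ordered read-`k`-times branching program (`k`-NOBDD) of width `w`
over `n` Boolean variables. -/
structure KNOBDD (n k w : ℕ) where
  order : Equiv.Perm (Fin n)
  trans : Fin (k * n) → Fin w → Bool → Fin w → Prop
  start : Fin w
  accept : Fin w → Prop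

/-- The `k`-NOBDD `P` computes `f` if for every input there is an accepting run iff `f` is 1. -/
def KNOBDD.Computes {n k w : ℕ} (P : KNOBDD n k w) (f : (Fin n → Bool) → Bool) : Prop :=
  ∀ ν : Fin n → Bool,
    (f ν = true ↔
      ∃ run : Fin (k * n + 1) → Fin w,
        run 0 = P.start ∧
        (∀ m : Fin (k * n),
          P.trans m (run m.castSucc) (ν (varIdx k P.order m)) (run m.succ)) ∧
        P.accept (run (Fin.last (k * n))))

lemma glue_runs {α : Type*} (n k : ℕ) (T : ℕ → α → α → Prop) (r : ℕ → ℕ → α)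
    (hT : ∀ i < k, ∀ m < n, T (i * n + m) (r i m) (r i (m + 1)))
    (hb : ∀ i, i + 1 < k → r i n = r (i + 1) 0) :
    ∀ j < k, ∃ run : ℕ → α, run 0 = r 0 0 ∧
      (∀ m < (j + 1) * n, T m (run m) (run (m + 1))) ∧ run ((j + 1) * n) = r j n := by
  intro j
  induction j with
  | zero =>
    intro h
    refine ⟨r 0, rfl, ?_, by simp⟩
    intro m hm
    have := hT 0 h m (by simpa using hm)
    simpa using this
  | succ j ih =>
    intro h
    obtain ⟨run, h0, h1, h2⟩ := ih (by omega)
    have hbj := hb j h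
    have hTj := hT (j + 1) h
    have e : (j + 1 + 1) * n = (j + 1) * n + n := by ring
    rw [e]
    generalize (j + 1) * n = N at *
    refine ⟨fun m => if m ≤ N then run m else r (j + 1) (m - N), by simpa using h0, ?_, ?_⟩
    · intro m hm
      rcases lt_trichotomy m N with hlt | heq | hgt
      · have a1 : m ≤ N := by omega
        have a2 : m + 1 ≤ N := by omega
        simp only [a1, a2, if_true]
        exact h1 m hlt
      · subst heq
        have := hTj 0 (by omega)
        simp only [le_refl, if_true, h2, hbj]
        simpa using this
      · have a1 : ¬ m ≤ N := by omega
        have a2 : ¬ m + 1 ≤ N := by omega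
        simp only [a1, a2, if_false]
        have := hTj (m - N) (by omega)
        have e1 : N + (m - N) = m := by omega
        have e2 : m - N + 1 = m + 1 - N := by omega
        rwa [e1, e2] at this
    · by_cases hn : n = 0
      · subst hn; simp [h2, hbj]
      · simp [hn]

/-- the start node of the `i`-th layer -/
def layerStart {n k w : ℕ} (P : KNOBDD n k w) (s : ℕ → Fin w) (i : ℕ) : Fin w :=
  if i = 0 then P.start else s (i - 1)

/-- the `i`-th layer of `P`, with boundary nodes `s` -/
def layerProg {n k w : ℕ} (P : KNOBDD n k w) (s : ℕ → Fin w) (i : ℕ) : KNOBDD n 1 w where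
  order := P.order
  trans m a v b := ∃ h : i * n + m.val < k * n, P.trans ⟨i * n + m.val, h⟩ a v b
  start := layerStart P s i
  accept a := if i + 1 < k then a = s i else P.accept a

theorem knobdd_decomposition (n k w : ℕ) (hk : 1 ≤ k) (hw : 1 ≤ w)
    (f : (Fin n → Bool) → Bool) (P : KNOBDD n k w) (hP : P.Computes f) :
    ∃ d : ℕ, 1 ≤ d ∧ d ≤ w ^ (k - 1) ∧
      ∃ g : Fin d → Fin k → (Fin n → Bool) → Bool,
        (∀ j i, ∃ Q : KNOBDD n 1 w, Q.order = P.order ∧ Q.Computes (g j i)) ∧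
        (∀ ν : Fin n → Bool, (f ν = true ↔ ∃ j : Fin d, ∀ i : Fin k, g j i ν = true)) := by
  classical
  have hcard : Fintype.card (Fin (k - 1) → Fin w) = w ^ (k - 1) := by simp
  let E : (Fin (k - 1) → Fin w) ≃ Fin (w ^ (k - 1)) := Fintype.equivFinOfCardEq hcard
  let S : Fin (w ^ (k - 1)) → ℕ → Fin w := fun j i =>
    if h : i < k - 1 then E.symm j ⟨i, h⟩ else ⟨0, hw⟩
  refine ⟨w ^ (k - 1), Nat.one_le_pow _ _ hw, le_rfl, fun j i ν => decide
      (∃ run : Fin (1 * n + 1) → Fin w,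
        run 0 = (layerProg P (S j) i).start ∧
        (∀ m : Fin (1 * n),
          (layerProg P (S j) i).trans m (run m.castSucc) (ν (varIdx 1 P.order m)) (run m.succ)) ∧
        (layerProg P (S j) i).accept (run (Fin.last (1 * n)))), ?_, ?_⟩
  · intro j i
    exact ⟨layerProg P (S j) i, rfl, fun ν => decide_eq_true_iff⟩
  intro ν
  rw [hP ν]
  simp only [decide_eq_true_eq]
  have hvar : ∀ (i m : ℕ) (h : i * n + m < k * n) (h' : m < 1 * n),
      varIdx k P.order ⟨i * n + m, h⟩ = varIdx 1 P.order ⟨m, h'⟩ := by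
    intro i m h h'
    unfold varIdx
    congr 1
    apply Fin.ext
    simp [Nat.add_mod]
  have hle : ∀ i < k, i * n + n ≤ k * n := by
    intro i hi
    calc i * n + n = (i + 1) * n := by ring
      _ ≤ k * n := Nat.mul_le_mul_right _ hi
  constructor
  · rintro ⟨run, h0, h1, h2⟩
    let R : ℕ → Fin w := fun m => if h : m < k * n + 1 then run ⟨m, h⟩ else ⟨0, hw⟩
    have hR : ∀ m (h : m < k * n + 1), R m = run ⟨m, h⟩ := fun m h => dif_pos h
    refine ⟨E fun i => R ((i + 1) * n), ?_⟩
    have hS : ∀ i, i + 1 < k → S (E fun i => R ((i + 1) * n)) i = R ((i + 1) * n) := by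
      intro i hi
      have : i < k - 1 := by omega
      simp [S, this]
    intro i
    have hlei := hle i i.2
    refine ⟨fun m => R (i * n + m), ?_, ?_, ?_⟩
    · simp only [layerProg, layerStart]
      split_ifs with hi
      · rw [hR _ (by simp [hi])]
        rw [← h0]; congr 1; apply Fin.ext; simp [hi]
      · rw [hS _ (by omega)]
        have : (i : ℕ) - 1 + 1 = i := by omega
        simp [this]
    · intro m
      have hm := m.2
      have hlt : i * n + m.val < k * n := by omega
      refine ⟨hlt, ?_⟩
      have := h1 ⟨i * n + m.val, hlt⟩
      rw [hvar i m hlt m.2] at this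
      simp only [Fin.val_castSucc, Fin.val_succ]
      rw [hR _ (by omega), hR _ (by omega)]
      exact this
    · simp only [layerProg, Fin.val_last]
      have e : (i : ℕ) * n + 1 * n = (i + 1) * n := by ring
      split_ifs with hi
      · rw [hS _ hi, e]
      · have hi' : (i : ℕ) + 1 = k := by omega
        rw [e, hi', hR _ (by omega)]
        exact h2
  · rintro ⟨j, hj⟩
    choose r hr0 hr1 hr2 using hj
    let r' : ℕ → ℕ → Fin w := fun i m =>
      if h : i < k ∧ m < 1 * n + 1 then r ⟨i, h.1⟩ ⟨m, h.2⟩ else ⟨0, hw⟩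
    have hr' : ∀ i m (hi : i < k) (hm : m < 1 * n + 1), r' i m = r ⟨i, hi⟩ ⟨m, hm⟩ :=
      fun i m hi hm => dif_pos ⟨hi, hm⟩
    have hlast : ∀ i (hi : i < k), r' i n = r ⟨i, hi⟩ (Fin.last (1 * n)) := by
      intro i hi
      rw [hr' i n hi (by omega)]
      congr 1; apply Fin.ext; simp
    have hzero : ∀ i (hi : i < k), r' i 0 = layerStart P (S j) i := by
      intro i hi
      rw [hr' i 0 hi (by omega)]
      exact hr0 ⟨i, hi⟩
    obtain ⟨run, a0, a1, a2⟩ := glue_runs n k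
      (fun m a b => ∃ h : m < k * n, P.trans ⟨m, h⟩ a (ν (varIdx k P.order ⟨m, h⟩)) b) r'
      (by
        intro i hi m hm
        have hm' : m < 1 * n := by omega
        obtain ⟨h, h3⟩ := hr1 ⟨i, hi⟩ ⟨m, hm'⟩
        refine ⟨h, ?_⟩
        rw [hvar i m h hm', hr' i m hi (by omega), hr' i (m + 1) hi (by omega)]
        exact h3)
      (by
        intro i hi
        rw [hlast i (by omega), hzero (i + 1) hi]
        have := hr2 ⟨i, by omega⟩
        simp only [layerProg, hi, if_true] at this
        simp [this, layerStart])
      (k - 1) (by omega)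
    have ek : k - 1 + 1 = k := by omega
    rw [ek] at a1 a2
    refine ⟨fun m => run m, ?_, ?_, ?_⟩
    · simp only [Fin.val_zero]
      rw [a0, hzero 0 (by omega)]
      simp [layerStart]
    · intro m
      obtain ⟨h, h3⟩ := a1 m m.2
      exact h3
    · simp only [Fin.val_last]
      rw [a2, hlast _ (by omega)]
      have := hr2 ⟨k - 1, by omega⟩
      simpa only [layerProg, ek, lt_irrefl, if_false] using this
end

section
/- Simulation theorem (Theorem 2): Let k ≥ 1, w ≥ 1 and let f : {0,1}^n → {0,1} be computed by a k-NOBDD of width w with order θ. Then f is computed by an NOBDD (i.e. a 1-NOBDD) of width at most w^{2k−1} with the same order θ. -/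
theorem varIdx_aux {n K : ℕ} (θ : Equiv.Perm (Fin n)) (i t : ℕ) (ht : t < n)
    (h : i * n + t < (K + 1) * n) (h' : t < 1 * n) :
    varIdx (K + 1) θ ⟨i * n + t, h⟩ = varIdx 1 θ ⟨t, h'⟩ := by
  unfold varIdx
  congr 2
  simp only
  rw [Nat.add_comm, Nat.add_mul_mod_self_right]

/-- Acceptance with runs indexed by natural numbers. -/
theorem run_iff_aux {n k w : ℕ} (P : KNOBDD n k w) (ν : Fin n → Bool) :
    (∃ run : Fin (k * n + 1) → Fin w,
        run 0 = P.start ∧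
        (∀ m : Fin (k * n),
          P.trans m (run m.castSucc) (ν (varIdx k P.order m)) (run m.succ)) ∧
        P.accept (run (Fin.last (k * n)))) ↔
    ∃ r : ℕ → Fin w, r 0 = P.start ∧
      (∀ (m : ℕ) (h : m < k * n),
        P.trans ⟨m, h⟩ (r m) (ν (varIdx k P.order ⟨m, h⟩)) (r (m + 1))) ∧
      P.accept (r (k * n)) := by
  constructor
  · rintro ⟨run, h0, h1, h2⟩
    refine ⟨fun m => if h : m < k * n + 1 then run ⟨m, h⟩ else P.start, ?_, ?_, ?_⟩
    · simpa using h0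
    · intro m h
      have a : m < k * n + 1 := by omega
      have b : m + 1 < k * n + 1 := by omega
      simp only [dif_pos a, dif_pos b]
      exact h1 ⟨m, h⟩
    · simp only [dif_pos (Nat.lt_succ_self (k * n))]
      exact h2
  · rintro ⟨r, h0, h1, h2⟩
    exact ⟨fun m => r m.val, h0, fun m => h1 m.val m.isLt, h2⟩

theorem idx_aux {n K : ℕ} (i : Fin (K + 1)) (m : Fin (1 * n)) :
    i.val * n + m.val < (K + 1) * n := by
  have h1 := i.isLt
  have h2 := m.isLt
  have : (i.val + 1) * n ≤ (K + 1) * n := Nat.mul_le_mul_right _ (by omega)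
  have h3 : (i.val + 1) * n = i.val * n + n := by ring
  omega

theorem knobdd_sim_aux (n K w N : ℕ)
    (e : ((Fin (K + 1) → Fin w) × (Fin K → Fin w)) ≃ Fin N)
    (f : (Fin n → Bool) → Bool) (P : KNOBDD n (K + 1) w) (hP : P.Computes f) :
    ∃ Q : KNOBDD n 1 N, Q.order = P.order ∧ Q.Computes f := by
  rcases Nat.eq_zero_or_pos n with rfl | hn
  · refine ⟨⟨P.order, fun _ _ _ _ => True, e (fun _ => P.start, fun _ => P.start),
      fun _ => P.accept P.start⟩, rfl, ?_⟩
    intro ν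
    rw [hP ν, run_iff_aux, run_iff_aux]
    constructor
    · rintro ⟨r, h0, -, h2⟩
      refine ⟨fun _ => e (fun _ => P.start, fun _ => P.start), rfl, fun _ _ => trivial, ?_⟩
      simp only [Nat.mul_zero] at h2
      rw [h0] at h2
      exact h2
    · rintro ⟨r, h0, -, h2⟩
      exact ⟨fun _ => P.start, rfl, fun m h => absurd h (by simp), h2⟩
  · let Q : KNOBDD n 1 N :=
      { order := P.order
        trans := fun m q b q' =>
          (m.val ≠ 0 → (e.symm q).2 = (e.symm q').2) ∧
          ∀ i : Fin (K + 1), P.trans ⟨i.val * n + m.val, idx_aux i m⟩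
            ((if m.val = 0 then (Fin.cons P.start (e.symm q').2 : Fin (K + 1) → Fin w)
              else (e.symm q).1) i) b ((e.symm q').1 i)
        start := e (fun _ => P.start, fun _ => P.start)
        accept := fun q => (∀ i : Fin K, (e.symm q).1 i.castSucc = (e.symm q).2 i) ∧
          P.accept ((e.symm q).1 (Fin.last K)) }
    refine ⟨Q, rfl, ?_⟩
    intro ν
    rw [hP ν, run_iff_aux, run_iff_aux]
    constructor
    · rintro ⟨r, h0, h1, h2⟩
      refine ⟨fun t => if t = 0 then Q.start else
        e (fun i => r (i.val * n + t), fun i => r ((i.val + 1) * n)), by simp, ?_, ?_⟩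
      · intro m h
        refine ⟨?_, ?_⟩
        · intro hm
          simp only [ne_eq] at hm
          simp [hm]
        · intro i
          have key := h1 (i.val * n + m) (idx_aux i ⟨m, h⟩)
          rw [varIdx_aux _ _ _ (by omega) _ h] at key
          by_cases hm : m = 0
          · subst hm
            simp only [if_true, Nat.zero_add, Nat.one_ne_zero, if_false,
              Equiv.symm_apply_apply]
            convert key using 1
            refine Fin.cases ?_ (fun j => ?_) i
            · simp [h0]
            · simp
          · simp only [hm, if_false, Nat.succ_ne_zero, Equiv.symm_apply_apply]
            exact key
      · have : 1 * n ≠ 0 := by omega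
        simp only [this, if_false]
        refine ⟨?_, ?_⟩
        · intro i
          simp only [Equiv.symm_apply_apply]
          congr 1
          simp; ring
        · simp only [Equiv.symm_apply_apply]
          convert h2 using 2
          simp; ring
    · rintro ⟨R, h0, h1, h2⟩
      have hg : ∀ t, t + 1 ≤ n → (e.symm (R (t + 1))).2 = (e.symm (R 1)).2 := by
        intro t
        induction t with
        | zero => intro _; rfl
        | succ t ih =>
          intro ht
          rw [← ih (by omega)]
          exact ((h1 (t + 1) (by omega)).1 (Nat.succ_ne_zero t)).symm
      obtain ⟨r, hr0, hr⟩ : ∃ r : ℕ → Fin w, r 0 = P.start ∧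
          ∀ (i : Fin (K + 1)) (t : ℕ), t < n →
            r (i.val * n + t + 1) = (e.symm (R (t + 1))).1 i := by
        refine ⟨fun m => if m = 0 then P.start else
          (e.symm (R ((m - 1) % n + 1))).1 (Fin.ofNat (K + 1) ((m - 1) / n)), by simp, ?_⟩
        intro i t ht
        have a : (i.val * n + t) % n = t := by
          rw [Nat.add_comm, Nat.add_mul_mod_self_right, Nat.mod_eq_of_lt ht]
        have b : (i.val * n + t) / n = i.val := by
          rw [Nat.add_comm, Nat.add_mul_div_right _ _ hn, Nat.div_eq_of_lt ht, Nat.zero_add]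
        have c : Fin.ofNat (K + 1) i.val = i := by
          ext; simp [Fin.ofNat, Nat.mod_eq_of_lt i.isLt]
        simp only [Nat.succ_ne_zero, if_false, Nat.add_sub_cancel, a, b, c]
      obtain ⟨n', rfl⟩ : ∃ n', n = n' + 1 := ⟨n - 1, by omega⟩
      rw [Nat.one_mul] at h2
      refine ⟨r, hr0, ?_, ?_⟩
      · intro m h
        obtain ⟨i, t, ht, rfl⟩ : ∃ (i : Fin (K + 1)) (t : ℕ), t < n' + 1 ∧
            m = i.val * (n' + 1) + t :=
          ⟨⟨m / (n' + 1), Nat.div_lt_of_lt_mul (by rw [Nat.mul_comm]; exact h)⟩,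
            m % (n' + 1), Nat.mod_lt _ hn, (Nat.div_add_mod' m (n' + 1)).symm⟩
        have key := (h1 t (by omega)).2 i
        rw [varIdx_aux _ _ _ ht _ (by omega), hr i t ht]
        convert key using 1
        cases t with
        | succ t =>
          simp only [Nat.succ_ne_zero, if_false]
          exact hr i t (by omega)
        | zero =>
          simp only [if_true]
          clear key h
          refine Fin.cases ?_ (fun j => ?_) i
          · simp [hr0]
          · have h3 := hr j.castSucc n' (by omega)
            rw [h2.1 j, hg n' (by omega)] at h3
            simp only [Fin.cons_succ, Nat.zero_add]
            rw [← h3]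
            congr 1
            simp; ring
      · have h3 := hr (Fin.last K) n' (by omega)
        have h4 := h2.2
        rw [← h3] at h4
        convert h4 using 2
        simp; ring

/-- **Simulation theorem.** If `f : {0,1}^n → {0,1}` is computed by a `k`-NOBDD of width `w`
with order `θ`, then `f` is computed by an NOBDD (a `1`-NOBDD) of width at most `w^(2k-1)`
with the same order `θ`. -/
theorem knobdd_simulation (n k w : ℕ) (hk : 1 ≤ k) (hw : 1 ≤ w)
    (f : (Fin n → Bool) → Bool) (P : KNOBDD n k w) (hP : P.Computes f) :
    ∃ Q : KNOBDD n 1 (w ^ (2 * k - 1)), Q.order = P.order ∧ Q.Computes f := by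
  obtain ⟨K, rfl⟩ : ∃ K, k = K + 1 := ⟨k - 1, by omega⟩
  refine knobdd_sim_aux n K w _ (Fintype.equivFinOfCardEq ?_) f P hP
  have : 2 * (K + 1) - 1 = (K + 1) + K := by omega
  rw [this, pow_add]
  simp
end

section
/- Upper bound for shuffled equality (Lemma peq1): Let k be a multiple of 4 with 4 ≤ k ≤ min(n, 2^{n/4}). Then the Boolean function EQS_k : {0,1}^n → {0,1} is computed by a deterministic k-OBDD of width at most k² + 6k + 2 whose order is the natural order (the identity permutation). -/
/-- A deterministic ordered read-`k`-times branching program (`k`-OBDD) of width `w`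
over `n` Boolean variables. -/
structure KOBDD (n k w : ℕ) where
  order : Equiv.Perm (Fin n)
  trans : Fin (k * n) → Fin w → Bool → Fin w
  start : Fin w
  accept : Fin w → Prop

/-- The node reached by the unique computation path of the `k`-OBDD `P` on input `ν`
after `m` levels. -/
def KOBDD.run {n k w : ℕ} (P : KOBDD n k w) (ν : Fin n → Bool) : ℕ → Fin w
  | 0 => P.start
  | m + 1 =>
    if h : m < k * n then
      P.trans ⟨m, h⟩ (P.run ν m) (ν (varIdx k P.order ⟨m, h⟩))
    else P.run ν m

/-- The `k`-OBDD `P` computes `f`. -/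
def KOBDD.Computes {n k w : ℕ} (P : KOBDD n k w) (f : (Fin n → Bool) → Bool) : Prop :=
  ∀ ν : Fin n → Bool, (f ν = true ↔ P.accept (P.run ν (k * n)))

/-- The `j`-th bit (0-based) of an input `ν ∈ {0,1}^n`, or `false` if out of range. -/
def bitOf {n : ℕ} (ν : Fin n → Bool) (j : ℕ) : Bool :=
  if h : j < n then ν ⟨j, h⟩ else false

/-- The string of value bits (bits at 1-based even positions `2i`) whose corresponding
marker bit (at 1-based odd position `2i-1`) equals `mark`, for `1 ≤ i ≤ d/2`, in order. -/
def eqsPart {n : ℕ} (d : ℕ) (mark : Bool) (ν : Fin n → Bool) : List Bool :=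
  ((List.range (d / 2)).filter (fun i => bitOf ν (2 * i) == mark)).map
    (fun i => bitOf ν (2 * i + 1))

/-- The shuffled equality function `EQS_d : {0,1}^n → {0,1}`: the value is `1` iff the string
`α(ν)` of value bits with marker `0` equals the string `β(ν)` of value bits with marker `1`. -/
def EQS (n d : ℕ) (ν : Fin n → Bool) : Bool :=
  decide (eqsPart d false ν = eqsPart d true ν)

abbrev ESt (k : ℕ) := Bool × Bool × Option Bool × Fin (k / 2 + 1)

def epart (x : ℕ → Bool) (mark : Bool) (i : ℕ) : List Bool :=
  ((List.range i).filter (fun i => x (2 * i) == mark)).map (fun i => x (2 * i + 1))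

def egood {k : ℕ} (s : ESt k) : Bool := s.1 && decide (s.2.2.1 = none)

/-- reset at the beginning of pass `p` -/
def ereset {k : ℕ} (p : ℕ) (s : ESt k) : ESt k :=
  if p % 2 = 0 then (egood s, false, none, 0) else (s.1, false, s.2.2.1, 0)

/-- process a value bit -/
def eproc {k : ℕ} (p : ℕ) (s : ESt k) (b : Bool) : ESt k :=
  if s.2.1 = decide (p % 2 = 1) then
    if s.2.2.2.val = p / 2 then
      if p % 2 = 0 then (s.1, s.2.1, some b, Fin.ofNat _ (s.2.2.2.val + 1))
      else (s.1 && decide (s.2.2.1 = some b), s.2.1, none, Fin.ofNat _ (s.2.2.2.val + 1))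
    else (s.1, s.2.1, s.2.2.1, Fin.ofNat _ (s.2.2.2.val + 1))
  else s

def enrm {k : ℕ} (p q : ℕ) (s : ESt k) : ESt k := if q = 0 then ereset p s else s

def estep {k : ℕ} (p q : ℕ) (s : ESt k) (b : Bool) : ESt k :=
  if k ≤ q then s else
  if q % 2 = 0 then ((enrm p q s).1, b, (enrm p q s).2.2) else eproc p s b

theorem epart_succ (x : ℕ → Bool) (mark : Bool) (i : ℕ) :
    epart x mark (i + 1) = epart x mark i ++ (if x (2 * i) = mark then [x (2 * i + 1)] else []) := by
  unfold epart
  rw [List.range_succ, List.filter_append, List.map_append]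
  by_cases h : x (2 * i) = mark <;> simp [h]

theorem epart_len (x : ℕ → Bool) (mark : Bool) (i : ℕ) : (epart x mark i).length ≤ i := by
  unfold epart
  rw [List.length_map]
  exact (List.length_filter_le _ _).trans (by simp)

/-- expected (flag, stored) after reading list L in pass p from (flag0, stored0) -/
def eexp (p : ℕ) (r : Bool × Option Bool) (L : List Bool) : Bool × Option Bool :=
  if p % 2 = 0 then (r.1, match L[p / 2]? with | none => r.2 | some v => some v) else
    match L[p / 2]? with
    | none => r
    | some v => (r.1 && decide (r.2 = some v), none)

theorem eproc_spec {k p i : ℕ} (hi : i < k / 2) (x : ℕ → Bool) (r : Bool × Option Bool)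
    (s : ESt k)
    (h1 : (s.1, s.2.2.1) = eexp p r (epart x (decide (p % 2 = 1)) i))
    (h2 : s.2.2.2.val = (epart x (decide (p % 2 = 1)) i).length)
    (h3 : s.2.1 = x (2 * i)) :
    ((eproc p s (x (2 * i + 1))).1, (eproc p s (x (2 * i + 1))).2.2.1)
      = eexp p r (epart x (decide (p % 2 = 1)) (i + 1)) ∧
    (eproc p s (x (2 * i + 1))).2.2.2.val = (epart x (decide (p % 2 = 1)) (i + 1)).length := by
  rw [epart_succ]
  have hl := epart_len x (decide (p % 2 = 1)) i
  generalize epart x (decide (p % 2 = 1)) i = L at *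
  generalize x (2 * i + 1) = v at *
  generalize x (2 * i) = m at *
  obtain ⟨ok, m', st, c⟩ := s
  obtain ⟨r1, r2⟩ := r
  simp only at h1 h2 h3
  subst h3
  have hc : (Fin.ofNat (k / 2 + 1) (c.val + 1)).val = c.val + 1 := by
    simp only [Fin.ofNat]
    exact Nat.mod_eq_of_lt (by omega)
  by_cases hm : m' = decide (p % 2 = 1)
  · rw [if_pos hm]
    have hlen : (L ++ [v]).length = L.length + 1 := by simp
    unfold eproc
    simp only [if_pos hm]
    by_cases hcj : c.val = p / 2
    · have hn : L[p / 2]? = none := List.getElem?_eq_none (by omega)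
      have hn' : (L ++ [v])[p / 2]? = some v := by
        rw [← hcj, h2]; simp
      simp only [if_pos hcj]
      unfold eexp at h1 ⊢
      rw [hn] at h1
      rw [hn']
      by_cases hp : p % 2 = 0
      · simp only [if_pos hp] at h1 ⊢
        simp only [Prod.mk.injEq] at h1
        exact ⟨by rw [h1.1], by rw [hc, hlen, h2]⟩
      · simp only [if_neg hp] at h1 ⊢
        simp only [Prod.mk.injEq] at h1
        exact ⟨by rw [h1.1, h1.2], by rw [hc, hlen, h2]⟩
    · simp only [if_neg hcj]
      have hn' : (L ++ [v])[p / 2]? = L[p / 2]? := by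
        rcases Nat.lt_or_ge (p / 2) L.length with h | h
        · rw [List.getElem?_append_left h]
        · rw [List.getElem?_eq_none h, List.getElem?_eq_none (by omega)]
      refine ⟨?_, by rw [hc, hlen, h2]⟩
      rw [h1]; unfold eexp; rw [hn']
  · rw [if_neg hm, List.append_nil]
    unfold eproc
    simp only [if_neg hm]
    exact ⟨h1, h2⟩

theorem epass (n k p : ℕ) (hp : p < k) (hkn : k ≤ n) (hk : 4 ≤ k) (hk4 : k % 4 = 0)
    (x : ℕ → Bool) (R : ℕ → ESt k)
    (hR : ∀ p q, p < k → q < n → R (p * n + (q + 1)) = estep p q (R (p * n + q)) (x q)) :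
    ((R ((p + 1) * n)).1, (R ((p + 1) * n)).2.2.1) =
      eexp p ((ereset p (R (p * n))).1, (ereset p (R (p * n))).2.2.1)
        (epart x (decide (p % 2 = 1)) (k / 2)) := by
  have key : ∀ i, i ≤ k / 2 →
      ((enrm p (2 * i) (R (p * n + 2 * i))).1, (enrm p (2 * i) (R (p * n + 2 * i))).2.2.1) =
      eexp p ((ereset p (R (p * n))).1, (ereset p (R (p * n))).2.2.1)
        (epart x (decide (p % 2 = 1)) i) ∧
      (enrm p (2 * i) (R (p * n + 2 * i))).2.2.2.val =
        (epart x (decide (p % 2 = 1)) i).length := by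
    intro i
    induction i with
    | zero =>
      intro _
      constructor
      · simp [enrm, eexp, epart]
      · simp [enrm, ereset, epart]; split_ifs <;> rfl
    | succ i ih =>
      intro hi
      obtain ⟨a, b⟩ := ih (by omega)
      have e1 := hR p (2 * i) hp (by omega)
      have e2 := hR p (2 * i + 1) hp (by omega)
      rw [e1] at e2
      have e3 : R (p * n + 2 * (i + 1)) = eproc p ((enrm p (2 * i) (R (p * n + 2 * i))).1,
          x (2 * i), (enrm p (2 * i) (R (p * n + 2 * i))).2.2) (x (2 * i + 1)) := by
        rw [show 2 * (i + 1) = 2 * i + 1 + 1 by ring, e2]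
        unfold estep
        rw [if_neg (by omega), if_neg (by omega), if_neg (by omega), if_pos (by omega)]
      have e4 : enrm p (2 * (i + 1)) (R (p * n + 2 * (i + 1))) = R (p * n + 2 * (i + 1)) := by
        unfold enrm; rw [if_neg (by omega)]
      rw [e4, e3]
      exact eproc_spec (by omega) x _ _ a b rfl
  have tail : ∀ q, k ≤ q → q ≤ n → R (p * n + q) = R (p * n + k) := by
    intro q hq
    induction q, hq using Nat.le_induction with
    | base => intro _; rfl
    | succ q hq ih =>
      intro h
      rw [hR p q hp (by omega), ← ih (by omega)]
      unfold estep; rw [if_pos hq]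
  have h := (key (k / 2) le_rfl).1
  rw [show 2 * (k / 2) = k by omega] at h
  unfold enrm at h
  rw [if_neg (by omega), ← tail n hkn le_rfl, ← Nat.succ_mul] at h
  exact h

theorem epair (n k j : ℕ) (hp : 2 * j + 1 < k) (hkn : k ≤ n) (hk : 4 ≤ k) (hk4 : k % 4 = 0)
    (x : ℕ → Bool) (R : ℕ → ESt k)
    (hR : ∀ p q, p < k → q < n → R (p * n + (q + 1)) = estep p q (R (p * n + q)) (x q)) :
    egood (R (2 * (j + 1) * n)) = true ↔ egood (R (2 * j * n)) = true ∧
      (epart x false (k / 2))[j]? = (epart x true (k / 2))[j]? := by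
  have h1 := epass n k (2 * j) (by omega) hkn hk hk4 x R hR
  have h2 := epass n k (2 * j + 1) (by omega) hkn hk hk4 x R hR
  rw [show 2 * (j + 1) = 2 * j + 1 + 1 by ring]
  have a1 : 2 * j % 2 = 0 := by omega
  have a2 : (2 * j + 1) % 2 = 1 := by omega
  have a3 : (2 * j + 1) / 2 = j := by omega
  have a4 : 2 * j / 2 = j := by omega
  simp only [eexp, ereset, a1, a2, a3, a4] at h1 h2
  simp at h1 h2
  obtain ⟨h1, h1'⟩ := h1
  rw [h1, h1'] at h2
  generalize R ((2 * j + 1 + 1) * n) = s at *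
  generalize egood (R (2 * j * n)) = g at *
  cases h : (epart x false (k / 2))[j]? <;> cases h' : (epart x true (k / 2))[j]? <;>
    simp [h, h'] at h2 ⊢ <;> simp [egood, h2.1, h2.2]

theorem eqs_upper_bound (n k : ℕ) (hk4 : k % 4 = 0) (hk : 4 ≤ k)
    (hkn : k ≤ n) (hk2 : k ≤ 2 ^ (n / 4)) :
    ∃ P : KOBDD n k (k ^ 2 + 6 * k + 2),
      P.order = Equiv.refl (Fin n) ∧ P.Computes (EQS n k) := by
  have hc : Fintype.card (ESt k) ≤ Fintype.card (Fin (k ^ 2 + 6 * k + 2)) := by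
    have h0 : Fintype.card (ESt k) = 2 * (2 * (3 * (k / 2 + 1))) := by
      simp [ESt]
    rw [h0, Fintype.card_fin]
    have : 2 * (k / 2) = k := by omega
    nlinarith
  obtain ⟨e⟩ := Function.Embedding.nonempty_of_card_le hc
  let s0 : ESt k := (true, false, none, 0)
  have hinv : ∀ s, Function.invFun e (e s) = s := Function.leftInverse_invFun e.injective
  let P : KOBDD n k (k ^ 2 + 6 * k + 2) :=
    { order := Equiv.refl _
      trans := fun m s b => e (estep (m.val / n) (m.val % n) (Function.invFun e s) b)
      start := e s0
      accept := fun s => egood (Function.invFun e s) = true }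
  refine ⟨P, rfl, ?_⟩
  intro ν
  have hR : ∀ p q, p < k → q < n → (fun m => Function.invFun e (P.run ν m)) (p * n + (q + 1)) =
      estep p q ((fun m => Function.invFun e (P.run ν m)) (p * n + q)) (bitOf ν q) := by
    intro p q hp hq
    have hlt : p * n + q < k * n := by nlinarith
    have hd : (p * n + q) / n = p := by
      rw [Nat.add_comm, Nat.add_mul_div_right _ _ (by omega), Nat.div_eq_of_lt hq, zero_add]
    have hm : (p * n + q) % n = q := by
      rw [Nat.add_comm, Nat.add_mul_mod_self_right, Nat.mod_eq_of_lt hq]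
    show Function.invFun e (P.run ν (p * n + q + 1)) = _
    rw [KOBDD.run, dif_pos hlt]
    simp only [P, hinv, varIdx, hd, hm, bitOf, dif_pos hq, Equiv.refl_apply]
  have main : ∀ j, j ≤ k / 2 → (egood (Function.invFun e (P.run ν (2 * j * n))) = true ↔
      ∀ i < j, (eqsPart k false ν)[i]? = (eqsPart k true ν)[i]?) := by
    intro j
    induction j with
    | zero => simp [KOBDD.run, P, hinv, s0, egood]
    | succ j ih =>
      intro hj
      have := epair n k j (by omega) hkn hk hk4 (bitOf ν)
        (fun m => Function.invFun e (P.run ν m)) hR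
      rw [this]
      show (egood (Function.invFun e (P.run ν (2 * j * n))) = true ∧
        (eqsPart k false ν)[j]? = (eqsPart k true ν)[j]?) ↔ _
      rw [ih (by omega)]
      constructor
      · rintro ⟨h, h'⟩ i hi
        rcases Nat.lt_succ_iff_lt_or_eq.mp hi with h1 | rfl
        · exact h i h1
        · exact h'
      · intro h
        exact ⟨fun i hi => h i (by omega), h j (by omega)⟩
  have h := main (k / 2) le_rfl
  rw [show 2 * (k / 2) = k by omega] at h
  show _ ↔ egood (Function.invFun e (P.run ν (k * n))) = true
  rw [h]
  simp only [EQS, decide_eq_true_eq]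
  constructor
  · intro h i _; rw [h]
  · intro h
    apply List.ext_getElem?
    intro i
    by_cases hi : i < k / 2
    · exact h i hi
    · have l1 : (eqsPart k false ν).length ≤ k / 2 := epart_len (bitOf ν) false (k / 2)
      have l2 : (eqsPart k true ν).length ≤ k / 2 := epart_len (bitOf ν) true (k / 2)
      rw [List.getElem?_eq_none (by omega), List.getElem?_eq_none (by omega)]
end

section
/- Lower bound for shuffled equality against k-NOBDDs (content of Lemma peq2_knobdd, concrete form): Let d be a multiple of 4 with 4 ≤ d ≤ min(n, 2^{n/4}), let k ≥ 1, w ≥ 1, and suppose some k-NOBDD of width w (with any order θ) computes EQS_d : {0,1}^n → {0,1}. Then w^{2k−1} > 2^{d/4} − 1. -/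
/-- cut lemma -/
theorem eqs_cut (c : ℕ → ℕ) (h0 : c 0 = 0) (hs : ∀ t, c (t+1) ≤ c t + 1) (D : ℕ) :
    ∀ N, D ≤ c N → ∃ t, t ≤ N ∧ c t = D := by
  intro N
  induction N with
  | zero => intro h; exact ⟨0, le_rfl, by omega⟩
  | succ N ih =>
    intro h
    by_cases h' : D ≤ c N
    · obtain ⟨t, ht, e⟩ := ih h'
      exact ⟨t, by omega, e⟩
    · exact ⟨N+1, le_rfl, by have := hs N; omega⟩

theorem eqs_map_idx (L : List ℕ) (hL : L.Nodup) (x : ℕ → Bool) :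
    L.map (fun j => x (L.idxOf j)) = (List.range L.length).map x := by
  apply List.ext_getElem
  · simp
  · intro i h1 h2
    simp only [List.getElem_map, List.getElem_range]
    rw [hL.idxOf_getElem]

theorem eqs_succ_mod (n m : ℕ) (hn : 0 < n) :
    ((m+1) % n = m % n + 1 ∧ m % n + 1 < n) ∨ ((m+1) % n = 0 ∧ m % n + 1 = n) := by
  have hlt := Nat.mod_lt m hn
  have h : (m+1) % n = (m % n + 1) % n := by simp [Nat.add_mod]
  by_cases hc : m % n + 1 < n
  · left; exact ⟨by rw [h, Nat.mod_eq_of_lt hc], hc⟩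
  · right
    have : m % n + 1 = n := by omega
    exact ⟨by rw [h, this, Nat.mod_self], this⟩

theorem eqs_combine {n k w : ℕ} (P : KNOBDD n k w) (t : ℕ) (ht0 : 0 < t) (htn : t < n) (hk : 1 ≤ k)
    (ν₁ ν₂ μ : Fin n → Bool) (r s : Fin (k * n + 1) → Fin w)
    (hμ1 : ∀ i, (P.order.symm i).val < t → μ i = ν₁ i)
    (hμ2 : ∀ i, ¬ (P.order.symm i).val < t → μ i = ν₂ i)
    (hr0 : r 0 = P.start)
    (hr : ∀ m : Fin (k * n), P.trans m (r m.castSucc) (ν₁ (varIdx k P.order m)) (r m.succ))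
    (hs : ∀ m : Fin (k * n), P.trans m (s m.castSucc) (ν₂ (varIdx k P.order m)) (s m.succ))
    (hsa : P.accept (s (Fin.last (k * n))))
    (hrs : ∀ m : Fin (k * n + 1), m.val < k * n → (m.val % n = t ∨ m.val % n = 0) → r m = s m) :
    ∃ run : Fin (k * n + 1) → Fin w,
        run 0 = P.start ∧
        (∀ m : Fin (k * n),
          P.trans m (run m.castSucc) (μ (varIdx k P.order m)) (run m.succ)) ∧
        P.accept (run (Fin.last (k * n))) := by
  have hkn : 0 < k * n := Nat.mul_pos hk (by omega)
  refine ⟨fun m => if m.val % n < t ∧ m.val < k * n then r m else s m, ?_, ?_, ?_⟩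
  · simp [ht0, hkn, hr0]
  · intro m
    have hpos : (P.order.symm (varIdx k P.order m)).val = m.val % n := by simp [varIdx]
    have hm := m.isLt
    have hsm := eqs_succ_mod n m.val (by omega)
    by_cases hc : m.val % n < t
    · rw [hμ1 _ (by rw [hpos]; exact hc)]
      have e1 : (if (m.castSucc).val % n < t ∧ (m.castSucc).val < k * n then r m.castSucc else s m.castSucc) = r m.castSucc := by
        rw [if_pos]; exact ⟨hc, hm⟩
      have hlt : m.val + 1 < k * n := by
        by_contra hcon
        have : m.val + 1 = k * n := by omega
        rw [this] at hsm
        simp at hsm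
        omega
      have e2 : (if (m.succ).val % n < t ∧ (m.succ).val < k * n then r m.succ else s m.succ) = r m.succ := by
        split_ifs with h
        · rfl
        · symm
          apply hrs
          · simpa using hlt
          · simp only [Fin.val_succ] at h ⊢
            omega
      simp only [e1, e2]
      exact hr m
    · rw [hμ2 _ (by rw [hpos]; exact hc)]
      have e1 : (if (m.castSucc).val % n < t ∧ (m.castSucc).val < k * n then r m.castSucc else s m.castSucc) = s m.castSucc := by
        rw [if_neg]; intro h; exact hc h.1
      have e2 : (if (m.succ).val % n < t ∧ (m.succ).val < k * n then r m.succ else s m.succ) = s m.succ := by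
        split_ifs with h
        · apply hrs
          · exact h.2
          · simp only [Fin.val_succ] at h ⊢
            omega
        · rfl
      simp only [e1, e2]
      exact hs m
  · simpa using hsa

/-- pair `j` is in the first part -/
def eqsA {n : ℕ} (θ : Equiv.Perm (Fin n)) (t j : ℕ) : Bool :=
  if h : 2 * j + 1 < n then decide ((θ.symm ⟨2*j+1, h⟩).val < t) else false

def eqsL {n : ℕ} (θ : Equiv.Perm (Fin n)) (t m : ℕ) (b : Bool) : List ℕ :=
  (List.range m).filter (fun j => (!eqsA θ t j) == b)

def eqsIn {n : ℕ} (θ : Equiv.Perm (Fin n)) (t m : ℕ) (x y : ℕ → Bool) (i : Fin n) : Bool :=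
  if i.val % 2 = 0 then !eqsA θ t (i.val / 2)
  else if eqsA θ t (i.val / 2) then x ((eqsL θ t m false).idxOf (i.val / 2))
  else y ((eqsL θ t m true).idxOf (i.val / 2))

theorem eqsPart_in {n d : ℕ} (hd : d % 2 = 0) (hdn : d ≤ n) (θ : Equiv.Perm (Fin n)) (t : ℕ)
    (x y : ℕ → Bool) (b : Bool) :
    eqsPart d b (eqsIn θ t (d/2) x y) =
      (List.range (eqsL θ t (d/2) b).length).map (if b then y else x) := by
  have hnd : (eqsL θ t (d/2) b).Nodup := List.nodup_range.filter _
  rw [← eqs_map_idx _ hnd]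
  have e : (List.range (d / 2)).filter (fun i => bitOf (eqsIn θ t (d/2) x y) (2 * i) == b)
      = eqsL θ t (d/2) b := by
    apply List.filter_congr
    intro j hj
    have hj : j < d/2 := by simpa using hj
    have h1 : 2 * j < n := by omega
    simp [bitOf, h1, eqsIn]
  unfold eqsPart
  rw [e]
  apply List.map_congr_left
  intro j hj
  simp only [eqsL, List.mem_filter, List.mem_range] at hj
  obtain ⟨hj, hb⟩ := hj
  have h1 : 2 * j + 1 < n := by omega
  have h2 : (2 * j + 1) / 2 = j := by omega
  have h3 : (2 * j + 1) % 2 = 1 := by omega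
  cases b <;> simp at hb <;> simp [bitOf, h1, eqsIn, h2, h3, hb]

theorem eqsL_false_len {n : ℕ} (θ : Equiv.Perm (Fin n)) (t m : ℕ) :
    (eqsL θ t m false).length = ((Finset.range m).filter (fun j => eqsA θ t j = true)).card := by
  have hnd : (eqsL θ t m false).Nodup := List.nodup_range.filter _
  rw [← List.toFinset_card_of_nodup hnd]
  congr 1
  ext j
  simp [eqsL]

theorem eqsL_len_add {n : ℕ} (θ : Equiv.Perm (Fin n)) (t m : ℕ) :
    (eqsL θ t m false).length + (eqsL θ t m true).length = m := by
  unfold eqsL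
  induction m with
  | zero => simp
  | succ m ih =>
    rw [List.range_succ, List.filter_append, List.filter_append, List.length_append,
      List.length_append]
    cases h : eqsA θ t m <;> simp [h] at ih ⊢ <;> omega

theorem eqsL_step {n : ℕ} (θ : Equiv.Perm (Fin n)) (t m : ℕ) :
    (eqsL θ (t+1) m false).length ≤ (eqsL θ t m false).length + 1 := by
  rw [eqsL_false_len, eqsL_false_len]
  by_cases ht : t < n
  · have hsub : (Finset.range m).filter (fun j => eqsA θ (t+1) j = true) ⊆
      insert ((θ ⟨t, ht⟩).val / 2) ((Finset.range m).filter (fun j => eqsA θ t j = true)) := by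
      intro j hj
      simp only [Finset.mem_filter, Finset.mem_insert, Finset.mem_range] at hj ⊢
      unfold eqsA at hj ⊢
      obtain ⟨hj, hj2⟩ := hj
      split_ifs at hj2 ⊢ with h
      simp only [decide_eq_true_eq] at hj2 ⊢
      by_cases hc : (θ.symm ⟨2*j+1, h⟩).val = t
      · left
        have : θ.symm ⟨2*j+1, h⟩ = ⟨t, ht⟩ := Fin.ext hc
        rw [← this]
        simp; omega
      · right; exact ⟨hj, by omega⟩
    exact (Finset.card_le_card hsub).trans (Finset.card_insert_le _ _)
  · refine (Finset.card_le_card ?_).trans (Nat.le_succ _)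
    intro j hj
    simp only [Finset.mem_filter, Finset.mem_range] at hj ⊢
    unfold eqsA at hj ⊢
    obtain ⟨hj, hj2⟩ := hj
    refine ⟨hj, ?_⟩
    split_ifs at hj2 ⊢ with h
    simp only [decide_eq_true_eq] at hj2 ⊢
    omega

/-- **Lower bound for shuffled equality against `k`-NOBDDs.** If some `k`-NOBDD of width `w`
(with any order) computes `EQS_d`, where `d` is a multiple of `4` with
`4 ≤ d ≤ min n 2^(n/4)`, then `w^(2k-1) > 2^(d/4) - 1`. -/
theorem eqs_lower_bound (n d k w : ℕ) (hd4 : d % 4 = 0) (hd : 4 ≤ d)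
    (hdn : d ≤ n) (hd2 : d ≤ 2 ^ (n / 4)) (hk : 1 ≤ k) (hw : 1 ≤ w)
    (P : KNOBDD n k w) (hP : P.Computes (EQS n d)) :
    2 ^ (d / 4) - 1 < w ^ (2 * k - 1) := by
  set θ := P.order with hθ
  set D := d / 4 with hD
  have hm : d / 2 = 2 * D := by omega
  have hz : (eqsL θ 0 (d/2) false).length = 0 := by
    rw [eqsL_false_len]; simp [eqsA]
  have hfull : (eqsL θ n (d/2) false).length = d / 2 := by
    rw [eqsL_false_len, Finset.filter_true_of_mem, Finset.card_range]
    intro j hj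
    have hj := Finset.mem_range.1 hj
    have h1 : 2 * j + 1 < n := by omega
    simp [eqsA, h1]
  obtain ⟨t, htn, ht⟩ := eqs_cut (fun t => (eqsL θ t (d/2) false).length) hz
    (fun t => eqsL_step θ t _) D n (by simp only [hfull]; omega)
  have ht2 : (eqsL θ t (d/2) true).length = D := by
    have := eqsL_len_add θ t (d/2); omega
  have ht0 : 0 < t := by
    rcases Nat.eq_zero_or_pos t with h | h
    · subst h; omega
    · exact h
  have htn' : t < n := by
    rcases Nat.lt_or_ge t n with h | h
    · exact h
    · have : t = n := by omega
      subst this; omega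
  let ext : (Fin D → Bool) → ℕ → Bool := fun x i => if h : i < D then x ⟨i, h⟩ else false
  have hEQ : ∀ x y : Fin D → Bool,
      EQS n d (eqsIn θ t (d/2) (ext x) (ext y)) = true ↔ x = y := by
    intro x y
    unfold EQS
    rw [decide_eq_true_eq, eqsPart_in (by omega) hdn, eqsPart_in (by omega) hdn, ht, ht2]
    constructor
    · intro h
      funext i
      have := List.map_inj_left.1 h i.val (by simp)
      simpa [ext] using this
    · rintro rfl; simp
  have hrun := fun x : Fin D → Bool => (hP _).1 ((hEQ x x).2 rfl)
  choose run h0 htr hacc using hrun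
  have hlev : ∀ i : Fin (2 * k - 1),
      (i.val + 1) / 2 * n + (if i.val % 2 = 0 then t else 0) < k * n + 1 := by
    intro i
    have hi := i.isLt
    have h1 : (i.val + 1) / 2 + 1 ≤ k := by omega
    have h2 := Nat.mul_le_mul_right n h1
    rw [Nat.add_mul] at h2
    split_ifs <;> omega
  let sig : (Fin D → Bool) → (Fin (2 * k - 1) → Fin w) := fun x i => run x ⟨_, hlev i⟩
  have hinj : Function.Injective sig := by
    intro x y hxy
    rw [← hEQ x y]
    apply (hP _).2
    refine eqs_combine P t ht0 htn' hk (eqsIn θ t (d/2) (ext x) (ext x))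
      (eqsIn θ t (d/2) (ext y) (ext y)) _ (run x) (run y) ?_ ?_ (h0 x) (htr x) (htr y) (hacc y) ?_
    · intro i hi
      unfold eqsIn
      split_ifs with h1 h2
      · rfl
      · rfl
      · exfalso
        apply h2
        have h3 : 2 * (i.val / 2) + 1 = i.val := by omega
        simp only [eqsA, h3]
        simpa using hi
    · intro i hi
      unfold eqsIn
      split_ifs with h1 h2
      · rfl
      · exfalso
        apply hi
        have h3 : 2 * (i.val / 2) + 1 = i.val := by omega
        simp only [eqsA, h3] at h2
        simpa using h2
      · rfl
    · intro m hmk hmt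
      have hq : m.val / n < k := by
        rw [Nat.div_lt_iff_lt_mul (by omega)]; exact hmk
      have hdm := Nat.div_add_mod' m.val n
      rcases hmt with h | h
      · have hi : 2 * (m.val / n) < 2 * k - 1 := by omega
        have := congrFun hxy ⟨_, hi⟩
        simp only [sig] at this
        have e : (2 * (m.val / n) + 1) / 2 * n + (if 2 * (m.val / n) % 2 = 0 then t else 0)
            = m.val := by
          rw [if_pos (by omega), show (2 * (m.val / n) + 1) / 2 = m.val / n by omega]; omega
        simpa only [e] using this
      · by_cases hm0 : m.val / n = 0
        · have : m = 0 := by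
            apply Fin.ext
            rw [hm0] at hdm
            rw [Fin.val_zero]; omega
          rw [this, h0, h0]
        · have hi : 2 * (m.val / n) - 1 < 2 * k - 1 := by omega
          have := congrFun hxy ⟨_, hi⟩
          simp only [sig] at this
          have e : (2 * (m.val / n) - 1 + 1) / 2 * n +
              (if (2 * (m.val / n) - 1) % 2 = 0 then t else 0) = m.val := by
            rw [if_neg (by omega), show (2 * (m.val / n) - 1 + 1) / 2 = m.val / n by omega]; omega
          simpa only [e] using this
  have hcard := Fintype.card_le_of_injective sig hinj
  simp only [Fintype.card_fun, Fintype.card_bool, Fintype.card_fin] at hcard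
  have : 0 < 2 ^ D := by positivity
  omega
end

section
/- Protocol simulation of k-NOBDDs (Lemma l1): Let f : {0,1}^n → {0,1} be computed by a k-NOBDD of width w ≥ 2 with order θ, and let l = ⌈log₂ w⌉. Then for every u with 1 ≤ u < n, letting π be the partition of the variables into X_A = {x_{θ(1)},…,x_{θ(u)}} and X_B = the remaining variables, the function f is computed by some (π, 2k−1, l) automata communication nondeterministic protocol. -/
/-- Merge an assignment `σ` to the variables in `A` with an assignment `γ` to the
variables outside `A` into a full assignment. -/
def mergeAssign {n : ℕ} (A : Finset (Fin n)) (σ : {i : Fin n // i ∈ A} → Bool)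
    (γ : {i : Fin n // i ∉ A} → Bool) : Fin n → Bool :=
  fun i => if h : i ∈ A then σ ⟨i, h⟩ else γ ⟨i, h⟩

/-- `N^π(f)`: the number of distinct subfunctions `γ ↦ f(σ,γ)` of `f` with respect to
the partition `π = (A, Aᶜ)` of the variables, as `σ` ranges over assignments to `A`. -/
def NsubA {n : ℕ} (f : (Fin n → Bool) → Bool) (A : Finset (Fin n)) : ℕ :=
  (Finset.univ.image fun σ : {i : Fin n // i ∈ A} → Bool =>
    fun γ : {i : Fin n // i ∉ A} → Bool => f (mergeAssign A σ γ)).card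

/-- A `(π, t, l)` automata communication nondeterministic protocol with partition
`π = (A, Aᶜ)`: `first` gives Alice's set of possible first messages; `nextA i` (for odd
rounds `i ≥ 3`) gives Alice's sets of messages depending on the previous message and her
input; `nextB i` (for even rounds `2 ≤ i ≤ t-1`) the same for Bob; `out` is Bob's output
after the last round `t`. Messages are strings in `{0,1}^l`. -/
structure NProtocol (n : ℕ) (A : Finset (Fin n)) (t l : ℕ) where
  first : ({i : Fin n // i ∈ A} → Bool) → Set (Fin l → Bool)
  nextA : ℕ → (Fin l → Bool) → ({i : Fin n // i ∈ A} → Bool) → Set (Fin l → Bool)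
  nextB : ℕ → (Fin l → Bool) → ({i : Fin n // i ∉ A} → Bool) → Set (Fin l → Bool)
  out : (Fin l → Bool) → ({i : Fin n // i ∉ A} → Bool) → Bool

/-- The protocol `P` computes `f`: on every input `(σ, γ)` split according to the
partition, `f(σ,γ) = 1` iff there is a chain of messages `m¹ ∈ μ¹(σ)`,
`m² ∈ μ²(m¹,γ)`, `m³ ∈ μ³(m²,σ)`, …, `mᵗ ∈ μᵗ(m^{t-1},σ)` with `out(mᵗ,γ) = 1`.
(Message `m^{j+1}`, i.e. `ms (j+1)` below, belongs to round `j+2`, which is handled by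
Bob when `j` is even and by Alice when `j` is odd.) -/
def NProtocol.Computes {n : ℕ} {A : Finset (Fin n)} {t l : ℕ} (P : NProtocol n A t l)
    (f : (Fin n → Bool) → Bool) : Prop :=
  ∀ (σ : {i : Fin n // i ∈ A} → Bool) (γ : {i : Fin n // i ∉ A} → Bool),
    (f (mergeAssign A σ γ) = true ↔
      ∃ ms : ℕ → (Fin l → Bool),
        ms 0 ∈ P.first σ ∧
        (∀ j : ℕ, j + 1 < t →
          if j % 2 = 0 then ms (j + 1) ∈ P.nextB (j + 2) (ms j) γ
          else ms (j + 1) ∈ P.nextA (j + 2) (ms j) σ) ∧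
        P.out (ms (t - 1)) γ = true)

/-- One step of the program at level `m` on input `ν`. -/
def kStep {n k w : ℕ} (P : KNOBDD n k w) (ν : Fin n → Bool) (m : ℕ) (p q : Fin w) : Prop :=
  ∃ h : m < k * n, P.trans ⟨m, h⟩ p (ν (varIdx k P.order ⟨m, h⟩)) q

/-- Existence of a path from level `a` to level `b`. -/
def kSeg {n k w : ℕ} (P : KNOBDD n k w) (ν : Fin n → Bool) (a b : ℕ) (p q : Fin w) : Prop :=
  ∃ s : ℕ → Fin w, s a = p ∧ s b = q ∧ ∀ m, a ≤ m → m < b → kStep P ν m (s m) (s (m + 1))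

theorem kSeg_trans {n k w : ℕ} (P : KNOBDD n k w) (ν : Fin n → Bool) (a b c : ℕ)
    (hab : a ≤ b) (hbc : b ≤ c) (p q r : Fin w)
    (h1 : kSeg P ν a b p q) (h2 : kSeg P ν b c q r) : kSeg P ν a c p r := by
  obtain ⟨s, hs1, hs2, hs⟩ := h1
  obtain ⟨t, ht1, ht2, ht⟩ := h2
  refine ⟨fun m => if m ≤ b then s m else t m, by simp [hab, hs1], ?_, ?_⟩
  · dsimp only
    split_ifs with h
    · have : b = c := le_antisymm hbc h
      subst this
      rw [hs2, ← ht1, ht2]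
    · exact ht2
  · intro m h1 h2
    dsimp only
    rcases lt_trichotomy m b with h | h | h
    · rw [if_pos h.le, if_pos (by omega)]
      exact hs m h1 h
    · subst h
      rw [if_pos le_rfl, if_neg (by omega), hs2, ← ht1]
      exact ht m le_rfl h2
    · rw [if_neg (by omega), if_neg (by omega)]
      exact ht m h.le h2

theorem kSeg_congr {n k w : ℕ} (P : KNOBDD n k w) (ν ν' : Fin n → Bool) (a b : ℕ)
    (p q : Fin w)
    (h : ∀ m (hm : m < k * n), a ≤ m → m < b →
      ν (varIdx k P.order ⟨m, hm⟩) = ν' (varIdx k P.order ⟨m, hm⟩))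
    (h1 : kSeg P ν a b p q) : kSeg P ν' a b p q := by
  obtain ⟨s, hs1, hs2, hs⟩ := h1
  refine ⟨s, hs1, hs2, fun m h1 h2 => ?_⟩
  obtain ⟨hm, ht⟩ := hs m h1 h2
  exact ⟨hm, by rw [← h m hm h1 h2]; exact ht⟩

theorem kComputes_iff {n k w : ℕ} (P : KNOBDD n k w) (ν : Fin n → Bool) :
    (∃ run : Fin (k * n + 1) → Fin w,
        run 0 = P.start ∧
        (∀ m : Fin (k * n),
          P.trans m (run m.castSucc) (ν (varIdx k P.order m)) (run m.succ)) ∧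
        P.accept (run (Fin.last (k * n)))) ↔
    ∃ q, kSeg P ν 0 (k * n) P.start q ∧ P.accept q := by
  constructor
  · rintro ⟨run, h0, h1, h2⟩
    refine ⟨_, ⟨fun m => if h : m < k * n + 1 then run ⟨m, h⟩ else P.start, ?_, ?_, ?_⟩, h2⟩
    · simpa using h0
    · simp [Fin.last]
    · intro m _ hm
      refine ⟨hm, ?_⟩
      dsimp only
      rw [dif_pos (by omega), dif_pos (by omega)]
      exact h1 ⟨m, hm⟩
  · rintro ⟨q, ⟨s, h0, h1, h2⟩, h3⟩
    refine ⟨fun m => s m.val, by simpa using h0, fun m => ?_, ?_⟩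
    · obtain ⟨_, h⟩ := h2 m.val (Nat.zero_le _) m.isLt
      exact h
    · simpa [h1] using h3

/-- Cut levels. -/
def kCut (n u j : ℕ) : ℕ := (j / 2) * n + (j % 2) * u

theorem kCut_even (n u i : ℕ) : kCut n u (2 * i) = i * n := by
  simp [kCut]

theorem kCut_odd (n u i : ℕ) : kCut n u (2 * i + 1) = i * n + u := by
  have h1 : (2 * i + 1) / 2 = i := by omega
  have h2 : (2 * i + 1) % 2 = 1 := by omega
  simp [kCut, h1, h2]

theorem kCut_succ_le (n u j : ℕ) (h : u < n) : kCut n u j ≤ kCut n u (j + 1) := by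
  rcases Nat.even_or_odd' j with ⟨i, rfl | rfl⟩
  · rw [kCut_even, kCut_odd]; omega
  · rw [show 2 * i + 1 + 1 = 2 * (i + 1) by ring, kCut_even, kCut_odd, Nat.add_mul]; omega

theorem kCut_mod_even (n u i m : ℕ) (hun : u < n) (h1 : kCut n u (2 * i) ≤ m)
    (h2 : m < kCut n u (2 * i + 1)) : m % n < u := by
  rw [kCut_even] at h1
  rw [kCut_odd] at h2
  obtain ⟨d, rfl⟩ := Nat.exists_eq_add_of_le h1
  rw [Nat.mul_add_mod_self_right, Nat.mod_eq_of_lt (by omega)]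
  omega

theorem kCut_mod_odd (n u i m : ℕ) (h1 : kCut n u (2 * i + 1) ≤ m)
    (h2 : m < kCut n u (2 * i + 1 + 1)) : ¬ m % n < u := by
  rw [kCut_odd] at h1
  rw [show 2 * i + 1 + 1 = 2 * (i + 1) by ring, kCut_even, Nat.add_mul] at h2
  obtain ⟨d, rfl⟩ := Nat.exists_eq_add_of_le h1
  rw [add_assoc, Nat.mul_add_mod_self_right, Nat.mod_eq_of_lt (by omega)]
  omega

theorem kSeg_chain {n k w : ℕ} (P : KNOBDD n k w) (ν : Fin n → Bool) (u : ℕ) (hun : u < n)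
    (r : ℕ → Fin w) (N : ℕ)
    (h : ∀ j < N, kSeg P ν (kCut n u j) (kCut n u (j + 1)) (r j) (r (j + 1))) :
    kSeg P ν 0 (kCut n u N) (r 0) (r N) := by
  induction N with
  | zero => exact ⟨fun _ => r 0, rfl, rfl, fun m _ h => by simp [kCut] at h⟩
  | succ N ih =>
    exact kSeg_trans P ν _ _ _ (Nat.zero_le _) (kCut_succ_le n u N hun) _ _ _
      (ih fun j hj => h j (by omega)) (h N (by omega))

theorem kSeg_mergeA {n k w : ℕ} (P : KNOBDD n k w) (u : ℕ) (hun : u < n)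
    (A : Finset (Fin n)) (hA : A = Finset.univ.filter
      fun i : Fin n => ((P.order.symm i : Fin n) : ℕ) < u)
    (σ : {i : Fin n // i ∈ A} → Bool) (γ γ' : {i : Fin n // i ∉ A} → Bool)
    (i : ℕ) (p q : Fin w)
    (h : kSeg P (mergeAssign A σ γ) (kCut n u (2 * i)) (kCut n u (2 * i + 1)) p q) :
    kSeg P (mergeAssign A σ γ') (kCut n u (2 * i)) (kCut n u (2 * i + 1)) p q := by
  refine kSeg_congr P _ _ _ _ _ _ (fun m hm h1 h2 => ?_) h
  have hmem : varIdx k P.order ⟨m, hm⟩ ∈ A := by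
    rw [hA]
    simpa [varIdx] using kCut_mod_even n u i m hun h1 h2
  simp [mergeAssign, hmem]

theorem kSeg_mergeB {n k w : ℕ} (P : KNOBDD n k w) (u : ℕ)
    (A : Finset (Fin n)) (hA : A = Finset.univ.filter
      fun i : Fin n => ((P.order.symm i : Fin n) : ℕ) < u)
    (σ σ' : {i : Fin n // i ∈ A} → Bool) (γ : {i : Fin n // i ∉ A} → Bool)
    (i : ℕ) (p q : Fin w)
    (h : kSeg P (mergeAssign A σ γ) (kCut n u (2 * i + 1)) (kCut n u (2 * i + 1 + 1)) p q) :
    kSeg P (mergeAssign A σ' γ) (kCut n u (2 * i + 1)) (kCut n u (2 * i + 1 + 1)) p q := by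
  refine kSeg_congr P _ _ _ _ _ _ (fun m hm h1 h2 => ?_) h
  have hmem : varIdx k P.order ⟨m, hm⟩ ∉ A := by
    rw [hA]
    simpa [varIdx] using kCut_mod_odd n u i m h1 h2
  simp [mergeAssign, hmem]

theorem kDecode (w : ℕ) (hw : 0 < w) :
    ∃ (e : Fin w → (Fin (Nat.clog 2 w) → Bool)) (d : (Fin (Nat.clog 2 w) → Bool) → Fin w),
      ∀ p, d (e p) = p := by
  haveI : Nonempty (Fin w) := ⟨⟨0, hw⟩⟩
  have : Fintype.card (Fin w) ≤ Fintype.card (Fin (Nat.clog 2 w) → Bool) := by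
    simpa using Nat.le_pow_clog (by norm_num) w
  obtain ⟨e⟩ := Function.Embedding.nonempty_of_card_le this
  exact ⟨e, Function.invFun e, Function.leftInverse_invFun e.injective⟩

/-- **Protocol simulation of `k`-NOBDDs.** If `f` is computed by a `k`-NOBDD of width
`w ≥ 2` with order `θ`, and `l = ⌈log₂ w⌉`, then for every `1 ≤ u < n`, taking the
partition with `X_A = {x_{θ(1)}, …, x_{θ(u)}}`, the function `f` is computed by some
`(π, 2k-1, l)` automata communication nondeterministic protocol. -/
theorem knobdd_to_protocol (n k w : ℕ) (hw : 2 ≤ w) (f : (Fin n → Bool) → Bool)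
    (P : KNOBDD n k w) (hP : P.Computes f) (u : ℕ) (hu1 : 1 ≤ u) (hun : u < n) :
    ∃ Q : NProtocol n (Finset.univ.filter fun i : Fin n => ((P.order.symm i : Fin n) : ℕ) < u)
        (2 * k - 1) (Nat.clog 2 w),
      Q.Computes f := by
  classical
  obtain ⟨e, d, hde⟩ := kDecode w (by omega)
  generalize hA : (Finset.univ.filter
    fun i : Fin n => ((P.order.symm i : Fin n) : ℕ) < u) = A
  replace hA := hA.symm
  rcases k with _ | K
  · refine ⟨⟨fun _ => Set.univ, fun _ _ _ => Set.univ, fun _ _ _ => Set.univ,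
      fun _ _ => decide (P.accept P.start)⟩, fun σ γ => ?_⟩
    rw [hP, kComputes_iff]
    constructor
    · rintro ⟨q, ⟨s, h0, h1, -⟩, h2⟩
      have : q = P.start := by rw [← h0, ← h1]; simp
      subst this
      exact ⟨fun _ _ => false, trivial, fun j hj => by omega, by simpa using h2⟩
    · rintro ⟨ms, -, -, h⟩
      exact ⟨P.start, ⟨fun _ => P.start, rfl, rfl, fun m _ h => by simp at h⟩, by simpa using h⟩
  · have hend : kCut n u (2 * K + 1 + 1) = (K + 1) * n := by
      rw [show 2 * K + 1 + 1 = 2 * (K + 1) by ring, kCut_even]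
    refine ⟨⟨
      fun σ => {m | kSeg P (mergeAssign A σ fun _ => false) (kCut n u 0) (kCut n u 1)
        P.start (d m)},
      fun i m σ => {m' | kSeg P (mergeAssign A σ fun _ => false) (kCut n u (i - 1)) (kCut n u i)
        (d m) (d m')},
      fun i m γ => {m' | kSeg P (mergeAssign A (fun _ => false) γ) (kCut n u (i - 1)) (kCut n u i)
        (d m) (d m')},
      fun m γ => decide (∃ q, kSeg P (mergeAssign A (fun _ => false) γ) (kCut n u (2 * K + 1))
        (kCut n u (2 * K + 1 + 1)) (d m) q ∧ P.accept q)⟩, fun σ γ => ?_⟩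
    rw [hP, kComputes_iff]
    have ht : 2 * (K + 1) - 1 - 1 = 2 * K := by omega
    simp only [ht, Set.mem_setOf_eq, decide_eq_true_eq]
    constructor
    · rintro ⟨q, ⟨s, h0, h1, h2⟩, h3⟩
      have hmono : Monotone (kCut n u) := monotone_nat_of_le_succ fun j => kCut_succ_le n u j hun
      have hseg : ∀ j, j < 2 * K + 1 + 1 → kSeg P (mergeAssign A σ γ) (kCut n u j)
          (kCut n u (j + 1)) (s (kCut n u j)) (s (kCut n u (j + 1))) := fun j hj =>
        ⟨s, rfl, rfl, fun m hm1 hm2 => h2 m (Nat.zero_le _) (by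
          have := hmono (show j + 1 ≤ 2 * K + 1 + 1 by omega)
          omega)⟩
      refine ⟨fun j => e (s (kCut n u (j + 1))), ?_, fun j hj => ?_, q, ?_, h3⟩
      · have := hseg 0 (by omega)
        rw [hde, ← h0]
        have h00 : kCut n u 0 = 0 := by simp [kCut]
        rw [← congrArg s h00]
        exact kSeg_mergeA P u hun A hA σ γ _ 0 _ _ this
      · have := hseg (j + 1) (by omega)
        simp only [hde]
        rcases Nat.even_or_odd' j with ⟨i, rfl | rfl⟩
        · rw [if_pos (by omega)]
          exact kSeg_mergeB P u A hA σ _ γ i _ _ this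
        · rw [if_neg (by omega)]
          exact kSeg_mergeA P u hun A hA σ γ _ (i + 1) _ _ this
      · have := hseg (2 * K + 1) (by omega)
        rw [hend, h1] at this
        rw [hde, hend]
        rw [← hend] at this ⊢
        exact kSeg_mergeB P u A hA σ _ γ K _ _ this
    · rintro ⟨ms, h0, h1, q, h2, h3⟩
      refine ⟨q, ?_, h3⟩
      rw [← hend]
      refine kSeg_trans P _ _ (kCut n u (2 * K + 1)) _ (Nat.zero_le _)
        (kCut_succ_le n u _ hun) _ (d (ms (2 * K))) _ ?_
        (kSeg_mergeB P u A hA _ σ γ K _ _ h2)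
      refine kSeg_chain P _ u hun (fun j => Nat.casesOn j P.start fun i => d (ms i))
        (2 * K + 1) fun j hj => ?_
      rcases j with _ | j
      · exact kSeg_mergeA P u hun A hA σ _ γ 0 _ _ h0
      · have := h1 j (by omega)
        rcases Nat.even_or_odd' j with ⟨i, rfl | rfl⟩
        · rw [if_pos (by omega)] at this
          exact kSeg_mergeB P u A hA _ σ γ i _ _ this
        · rw [if_neg (by omega)] at this
          exact kSeg_mergeA P u hun A hA σ _ γ (i + 1) _ _ this
end

section
/- Subfunction bound from nondeterministic automata protocols (Lemma l2): Let t ≥ 1 be odd, l ≥ 1, and let π = (X_A, X_B) be a partition of the n Boolean variables. If f : {0,1}^n → {0,1} is computed by some (π, t, l) automata communication nondeterministic protocol, then N^π(f) ≤ 2^{2^l·((t+1)·2^{l−1} + l)}. -/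
/-- **Subfunction bound from nondeterministic automata protocols.** If `t ≥ 1` is odd,
`l ≥ 1`, and `f : {0,1}^n → {0,1}` is computed by some `(π, t, l)` automata communication
nondeterministic protocol with partition `π = (A, Aᶜ)`, then
`N^π(f) ≤ 2^(2^l · ((t+1)·2^(l-1) + l))`. -/
theorem protocol_subfunction_bound (n t l : ℕ) (ht : Odd t) (ht1 : 1 ≤ t) (hl : 1 ≤ l)
    (A : Finset (Fin n)) (f : (Fin n → Bool) → Bool)
    (P : NProtocol n A t l) (hP : P.Computes f) :
    NsubA f A ≤ 2 ^ (2 ^ l * ((t + 1) * 2 ^ (l - 1) + l)) := by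
  classical
  obtain ⟨k, rfl⟩ := ht
  let g : Set (Fin l → Bool) × (Fin k → (Fin l → Bool) → Set (Fin l → Bool)) →
      (({i : Fin n // i ∉ A} → Bool) → Bool) := fun T γ =>
    decide (∃ ms : ℕ → (Fin l → Bool),
        ms 0 ∈ T.1 ∧
        (∀ j : ℕ, j + 1 < 2 * k + 1 → j % 2 = 0 → ms (j + 1) ∈ P.nextB (j + 2) (ms j) γ) ∧
        (∀ i : Fin k, ms (2 * i.1 + 1 + 1) ∈ T.2 i (ms (2 * i.1 + 1))) ∧
        P.out (ms (2 * k + 1 - 1)) γ = true)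
  have hsub : (Finset.univ.image fun σ : {i : Fin n // i ∈ A} → Bool =>
      fun γ : {i : Fin n // i ∉ A} → Bool => f (mergeAssign A σ γ)) ⊆ Finset.univ.image g := by
    intro h hh
    obtain ⟨σ, -, rfl⟩ := Finset.mem_image.1 hh
    refine Finset.mem_image.2
      ⟨(P.first σ, fun i m => P.nextA (2 * i.1 + 1 + 2) m σ), Finset.mem_univ _, ?_⟩
    funext γ
    rw [Bool.eq_iff_iff, hP σ γ]
    simp only [g, decide_eq_true_eq]
    refine exists_congr fun ms => and_congr_right fun _ => ?_
    constructor
    · rintro ⟨hB, hA, ho⟩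
      refine ⟨fun j hj => ?_, ho⟩
      split_ifs with h0
      · exact hB j hj h0
      · obtain ⟨i, rfl⟩ : ∃ i, j = 2 * i + 1 := ⟨j / 2, by omega⟩
        exact hA ⟨i, by omega⟩
    · rintro ⟨h1, ho⟩
      refine ⟨fun j hj h0 => ?_, fun i => ?_, ho⟩
      · simpa [h0] using h1 j hj
      · have h2 := h1 (2 * i.1 + 1) (by omega)
        rwa [if_neg (by omega)] at h2
  have hc := (Finset.card_le_card hsub).trans Finset.card_image_le
  unfold NsubA
  refine le_trans (le_of_eq (by congr)) (hc.trans ?_)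
  rw [Finset.card_univ]
  simp only [Fintype.card_prod, Fintype.card_pi, Fintype.card_set, Fintype.card_bool,
    Finset.prod_const, Finset.card_univ, Fintype.card_fin]
  rw [← pow_mul, ← pow_mul, ← pow_add]
  apply Nat.pow_le_pow_right (by norm_num)
  obtain ⟨l, rfl⟩ : ∃ m, l = m + 1 := ⟨l - 1, by omega⟩
  simp only [Nat.add_sub_cancel, pow_succ]
  generalize 2 ^ l = L
  nlinarith [Nat.zero_le (L * l), Nat.zero_le (L * L)]
end

section
/- Subfunction bound for k-NOBDDs (Theorem th-main2-small): Let f : {0,1}^n → {0,1} be computed by a k-NOBDD of width w (with some order θ), where k ≥ 1, w ≥ 1 and n ≥ 2. Then N(f) ≤ 2^{w·((k−1)·w + 1)}. -/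
/-- `N^θ(f)`: the maximum of `N^π(f)` over all partitions `π` agreeing with the order `θ`,
i.e. with `X_A = {x_{θ(1)}, …, x_{θ(u)}}` for some `1 ≤ u ≤ n - 1`. -/
def NsubTheta {n : ℕ} (f : (Fin n → Bool) → Bool) (θ : Equiv.Perm (Fin n)) : ℕ :=
  (Finset.Icc 1 (n - 1)).sup fun u =>
    NsubA f (Finset.univ.filter fun i : Fin n => ((θ.symm i : Fin n) : ℕ) < u)

/-- `N(f)`: the minimum of `N^θ(f)` over all orders `θ`. -/
def Nmin {n : ℕ} (f : (Fin n → Bool) → Bool) : ℕ :=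
  Finset.univ.inf' Finset.univ_nonempty fun θ : Equiv.Perm (Fin n) => NsubTheta f θ

/-- One step at level `m`. -/
def KNOBDD.T {n k w : ℕ} (P : KNOBDD n k w) (ν : Fin n → Bool) (m : ℕ) (a b : Fin w) : Prop :=
  ∃ h : m < k * n, P.trans ⟨m, h⟩ a (ν (varIdx k P.order ⟨m, h⟩)) b

/-- Reachability from level `s` in `l` steps. -/
def KNOBDD.Reach {n k w : ℕ} (P : KNOBDD n k w) (ν : Fin n → Bool) (s : ℕ) :
    ℕ → Fin w → Fin w → Prop
  | 0 => fun a b => a = b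
  | l + 1 => fun a b => ∃ c, P.Reach ν s l a c ∧ P.T ν (s + l) c b

theorem KNOBDD.reach_add {n k w : ℕ} (P : KNOBDD n k w) (ν : Fin n → Bool) (s l₁ l₂ : ℕ)
    (a b : Fin w) : P.Reach ν s (l₁ + l₂) a b ↔
      ∃ c, P.Reach ν s l₁ a c ∧ P.Reach ν (s + l₁) l₂ c b := by
  induction l₂ generalizing b with
  | zero => simp [KNOBDD.Reach]
  | succ l ih =>
    rw [← Nat.add_assoc]
    simp only [KNOBDD.Reach, ih, Nat.add_assoc]
    constructor
    · rintro ⟨c, ⟨d, h1, h2⟩, h3⟩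
      exact ⟨d, h1, c, h2, h3⟩
    · rintro ⟨d, h1, c, h2, h3⟩
      exact ⟨c, ⟨d, h1, h2⟩, h3⟩

theorem KNOBDD.reach_congr {n k w : ℕ} (P : KNOBDD n k w) (ν ν' : Fin n → Bool) (s l : ℕ)
    (h : ∀ m (hm : m < k * n), s ≤ m → m < s + l →
      ν (varIdx k P.order ⟨m, hm⟩) = ν' (varIdx k P.order ⟨m, hm⟩)) :
    P.Reach ν s l = P.Reach ν' s l := by
  induction l with
  | zero => rfl
  | succ l ih =>
    have ih' := ih (fun m hm h1 h2 => h m hm h1 (by omega))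
    funext a b
    simp only [KNOBDD.Reach, ih', KNOBDD.T]
    refine propext (exists_congr fun c => and_congr Iff.rfl (exists_congr fun hm => ?_))
    rw [h (s + l) hm (by omega) (by omega)]

theorem KNOBDD.reach_run {n k w : ℕ} (P : KNOBDD n k w) (ν : Fin n → Bool) (l : ℕ)
    (a b : Fin w) : P.Reach ν 0 l a b ↔
      ∃ run : ℕ → Fin w, run 0 = a ∧ (∀ m < l, P.T ν m (run m) (run (m + 1))) ∧ run l = b := by
  induction l generalizing b with
  | zero =>
    constructor
    · intro h
      exact ⟨fun _ => a, rfl, by simp, h⟩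
    · rintro ⟨r, h1, -, h2⟩
      exact h1.symm.trans h2
  | succ l ih =>
    simp only [KNOBDD.Reach, ih, Nat.zero_add]
    constructor
    · rintro ⟨c, ⟨r, h1, h2, h3⟩, h4⟩
      refine ⟨fun m => if m ≤ l then r m else b, by simp [h1], ?_, by simp⟩
      intro m hm
      rcases Nat.lt_succ_iff_lt_or_eq.1 hm with h | h
      · have := h2 m h
        simpa [h.le, Nat.succ_le_of_lt h] using this
      · subst h
        simpa [h3] using h4
    · rintro ⟨r, h1, h2, h3⟩
      exact ⟨r l, ⟨r, h1, fun m hm => h2 m (by omega), rfl⟩, h3 ▸ h2 l (by omega)⟩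

theorem KNOBDD.computes_reach {n k w : ℕ} (P : KNOBDD n k w) (f : (Fin n → Bool) → Bool)
    (hP : P.Computes f) (ν : Fin n → Bool) :
    f ν = true ↔ ∃ b, P.Reach ν 0 (k * n) P.start b ∧ P.accept b := by
  rw [hP ν]
  simp only [KNOBDD.reach_run]
  constructor
  · rintro ⟨r, h1, h2, h3⟩
    refine ⟨r (Fin.last _), ⟨fun m => if h : m < k * n + 1 then r ⟨m, h⟩ else P.start,
      ?_, ?_, ?_⟩, h3⟩
    · simpa using h1
    · intro m hm
      refine ⟨hm, ?_⟩
      have := h2 ⟨m, hm⟩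
      simpa [hm, Nat.lt_succ_of_lt hm] using this
    · simp [Fin.last]
  · rintro ⟨b, ⟨r, h1, h2, h3⟩, h4⟩
    refine ⟨fun i => r i, h1, ?_, ?_⟩
    · intro m
      obtain ⟨_, h⟩ := h2 m m.2
      exact h
    · simpa [h3] using h4

theorem card_image_le_of_factors {α β γ : Type*} [Fintype α] [DecidableEq β] [Fintype γ]
    (F : α → β) (D : α → γ) (h : ∀ x y, D x = D y → F x = F y) :
    (Finset.univ.image F).card ≤ Fintype.card γ := by
  classical
  by_cases hα : Nonempty α
  · obtain ⟨x0⟩ := hα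
    have : Finset.univ.image F ⊆
        Finset.univ.image (fun c : γ => if hc : ∃ x, D x = c then F hc.choose else F x0) := by
      intro y hy
      obtain ⟨x, -, rfl⟩ := Finset.mem_image.1 hy
      refine Finset.mem_image.2 ⟨D x, Finset.mem_univ _, ?_⟩
      have hc : ∃ z, D z = D x := ⟨x, rfl⟩
      rw [dif_pos hc]
      exact h _ _ hc.choose_spec
    exact (Finset.card_le_card this).trans Finset.card_image_le
  · rw [not_nonempty_iff] at hα
    simp

theorem KNOBDD.nsub_le {n k w : ℕ} (hk : 1 ≤ k)
    (f : (Fin n → Bool) → Bool) (P : KNOBDD n k w) (hP : P.Computes f) (u : ℕ) (hu : u < n) :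
    NsubA f (Finset.univ.filter fun i : Fin n => ((P.order.symm i : Fin n) : ℕ) < u)
      ≤ 2 ^ (w * ((k - 1) * w + 1)) := by
  classical
  set A := Finset.univ.filter fun i : Fin n => ((P.order.symm i : Fin n) : ℕ) < u with hA
  have hmem : ∀ m (hm : m < k * n), varIdx k P.order ⟨m, hm⟩ ∈ A ↔ m % n < u := by
    intro m hm
    simp [hA, varIdx]
  have hmod : ∀ j r, r < n → (j * n + r) % n = r := by
    intro j r hr
    rw [Nat.mul_comm, Nat.mul_add_mod, Nat.mod_eq_of_lt hr]
  -- the A part does not depend on γ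
  have hAp : ∀ σ γ γ' j, P.Reach (mergeAssign A σ γ) (j * n) u
      = P.Reach (mergeAssign A σ γ') (j * n) u := by
    intro σ γ γ' j
    apply P.reach_congr
    intro m hm h1 h2
    obtain ⟨r, rfl⟩ := Nat.exists_eq_add_of_le h1
    have : varIdx k P.order ⟨j * n + r, hm⟩ ∈ A := by
      rw [hmem, hmod j r (by omega)]; omega
    simp [mergeAssign, this]
  have hBp : ∀ σ σ' γ j, P.Reach (mergeAssign A σ γ) (j * n + u) (n - u)
      = P.Reach (mergeAssign A σ' γ) (j * n + u) (n - u) := by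
    intro σ σ' γ j
    apply P.reach_congr
    intro m hm h1 h2
    obtain ⟨r, rfl⟩ := Nat.exists_eq_add_of_le h1
    have : varIdx k P.order ⟨j * n + u + r, hm⟩ ∉ A := by
      rw [hmem, Nat.add_assoc, hmod j (u + r) (by omega)]; omega
    simp [mergeAssign, this]
  let D : ({i : Fin n // i ∈ A} → Bool) → (Fin w → Prop) × (Fin (k - 1) → Fin w → Fin w → Prop) :=
    fun σ => (P.Reach (mergeAssign A σ fun _ => false) (0 * n) u P.start,
      fun j => P.Reach (mergeAssign A σ fun _ => false) ((j + 1) * n) u)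
  have hcard : Fintype.card ((Fin w → Prop) × (Fin (k - 1) → Fin w → Fin w → Prop))
      = 2 ^ (w * ((k - 1) * w + 1)) := by
    simp only [Fintype.card_prod, Fintype.card_fun, Fintype.card_prop, Fintype.card_fin]
    rw [← pow_mul, ← pow_mul, ← pow_add]
    congr 1
    ring
  rw [← hcard]
  unfold NsubA
  refine card_image_le_of_factors _ D ?_
  intro σ σ' hD
  have hD1 := congrArg Prod.fst hD
  have hD2 := congrArg Prod.snd hD
  simp only [D] at hD1 hD2
  funext γ
  have key : ∀ j ≤ k, P.Reach (mergeAssign A σ γ) 0 (j * n) P.start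
      = P.Reach (mergeAssign A σ' γ) 0 (j * n) P.start := by
    intro j
    induction j with
    | zero => intro _; simp [KNOBDD.Reach]
    | succ j ih =>
      intro hj
      have e : (j + 1) * n = (j * n + u) + (n - u) := by
        rw [Nat.succ_mul]; omega
      have mid : P.Reach (mergeAssign A σ γ) 0 (j * n + u) P.start
          = P.Reach (mergeAssign A σ' γ) 0 (j * n + u) P.start := by
        rcases j with _ | j
        · have h := hD1
          rw [hAp σ _ γ 0, hAp σ' _ γ 0] at h
          simpa using h
        · have h := congrFun hD2 ⟨j, by omega⟩
          simp only at h
          rw [hAp σ _ γ (j + 1), hAp σ' _ γ (j + 1)] at h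
          funext b
          rw [eq_iff_iff, P.reach_add, P.reach_add, ih (by omega), Nat.zero_add, h]
      funext b
      rw [e, eq_iff_iff, P.reach_add, P.reach_add, mid, Nat.zero_add, hBp σ σ' γ j]
  rw [Bool.eq_iff_iff, P.computes_reach f hP, P.computes_reach f hP, key k le_rfl]

/-- **Subfunction bound for `k`-NOBDDs.** If `f : {0,1}^n → {0,1}` (`n ≥ 2`) is computed
by a `k`-NOBDD of width `w` (`k ≥ 1`, `w ≥ 1`), then `N(f) ≤ 2^(w·((k-1)·w + 1))`. -/
theorem knobdd_subfunction_bound (n k w : ℕ) (hn : 2 ≤ n) (hk : 1 ≤ k) (hw : 1 ≤ w)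
    (f : (Fin n → Bool) → Bool) (P : KNOBDD n k w) (hP : P.Computes f) :
    Nmin f ≤ 2 ^ (w * ((k - 1) * w + 1)) := by
  refine (Finset.inf'_le _ (Finset.mem_univ P.order)).trans ?_
  refine Finset.sup_le fun u hu => ?_
  rw [Finset.mem_Icc] at hu
  exact P.nsub_le hk f hP u (by omega)
end

section
/- Subfunction bound for bounded-error probabilistic k-OBDDs (Theorem th-main3-small): For every δ with 0 < δ < 1/2 there exist constants C₁ > 0 and C₂ > 0 such that for all n ≥ 2, k ≥ 1, w ≥ 2 and every f : {0,1}^n → {0,1}: if f is computed with bounded error δ by a k-POBDD of width w (with some order θ), then N(f) ≤ (C₁·k·(C₂ + log₂ w + log₂ k))^{(k+1)·w²}. -/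
/-- A probabilistic ordered read-`k`-times branching program (`k`-POBDD) of width `w` over
`n` Boolean variables: at each node, for each value of the read bit, the next node is
chosen according to a probability distribution over the nodes of the next level. -/
structure KPOBDD (n k w : ℕ) where
  order : Equiv.Perm (Fin n)
  trans : Fin (k * n) → Fin w → Bool → Fin w → ℝ
  trans_nonneg : ∀ m v b v', 0 ≤ trans m v b v'
  trans_sum : ∀ m v b, ∑ v', trans m v b v' = 1
  start : Fin w
  accept : Finset (Fin w)

/-- The probability distribution over the nodes of level `m` reached by the `k`-POBDD `P`
on input `ν`. -/
noncomputable def KPOBDD.dist {n k w : ℕ} (P : KPOBDD n k w) (ν : Fin n → Bool) :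
    ℕ → Fin w → ℝ
  | 0 => fun v => if v = P.start then 1 else 0
  | m + 1 => fun v' =>
    if h : m < k * n then
      ∑ v, P.dist ν m v * P.trans ⟨m, h⟩ v (ν (varIdx k P.order ⟨m, h⟩)) v'
    else P.dist ν m v'

/-- The probability that the `k`-POBDD `P` reaches an accepting node on input `ν`. -/
noncomputable def KPOBDD.acceptProb {n k w : ℕ} (P : KPOBDD n k w) (ν : Fin n → Bool) : ℝ :=
  ∑ v ∈ P.accept, P.dist ν (k * n) v

/-- The `k`-POBDD `P` computes `f` with bounded error `δ`: inputs with `f ν = 1` are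
accepted with probability greater than `1/2 + δ`, and inputs with `f ν = 0` are accepted
with probability less than `1/2 - δ`. -/
def KPOBDD.ComputesBE {n k w : ℕ} (P : KPOBDD n k w) (δ : ℝ)
    (f : (Fin n → Bool) → Bool) : Prop :=
  ∀ ν : Fin n → Bool,
    (f ν = true → P.acceptProb ν > 1 / 2 + δ) ∧
    (f ν = false → P.acceptProb ν < 1 / 2 - δ)

/-- one-step matrix -/
noncomputable def KPOBDD.stepM {n k w : ℕ} (P : KPOBDD n k w) (ν : Fin n → Bool) (m : ℕ) :
    Matrix (Fin w) (Fin w) ℝ :=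
  if h : m < k * n then
    Matrix.of fun v v' => P.trans ⟨m, h⟩ v (ν (varIdx k P.order ⟨m, h⟩)) v' else 1

noncomputable def KPOBDD.blk {n k w : ℕ} (P : KPOBDD n k w) (ν : Fin n → Bool) (a : ℕ) :
    ℕ → Matrix (Fin w) (Fin w) ℝ
  | 0 => 1
  | l + 1 => P.blk ν a l * P.stepM ν (a + l)

def IsStoch {w : ℕ} (M : Matrix (Fin w) (Fin w) ℝ) : Prop :=
  (∀ i j, 0 ≤ M i j) ∧ ∀ i, ∑ j, M i j = 1

lemma isStoch_one {w : ℕ} : IsStoch (1 : Matrix (Fin w) (Fin w) ℝ) := by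
  refine ⟨fun i j => ?_, fun i => ?_⟩
  · rw [Matrix.one_apply]; split_ifs <;> norm_num
  · simp [Matrix.one_apply]

lemma IsStoch.mul {w : ℕ} {M N : Matrix (Fin w) (Fin w) ℝ} (hM : IsStoch M) (hN : IsStoch N) :
    IsStoch (M * N) := by
  refine ⟨fun i j => ?_, fun i => ?_⟩
  · rw [Matrix.mul_apply]
    exact Finset.sum_nonneg fun x _ => mul_nonneg (hM.1 _ _) (hN.1 _ _)
  · simp only [Matrix.mul_apply]
    rw [Finset.sum_comm]
    simp only [← Finset.mul_sum, hN.2, mul_one, hM.2]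

lemma stepM_stoch {n k w : ℕ} (P : KPOBDD n k w) (ν : Fin n → Bool) (m : ℕ) :
    IsStoch (P.stepM ν m) := by
  unfold KPOBDD.stepM
  split_ifs with h
  · exact ⟨fun i j => P.trans_nonneg _ _ _ _, fun i => P.trans_sum _ _ _⟩
  · exact isStoch_one

lemma blk_stoch {n k w : ℕ} (P : KPOBDD n k w) (ν : Fin n → Bool) (a l : ℕ) :
    IsStoch (P.blk ν a l) := by
  induction l with
  | zero => exact isStoch_one
  | succ l ih => exact ih.mul (stepM_stoch P ν _)

lemma dist_succ {n k w : ℕ} (P : KPOBDD n k w) (ν : Fin n → Bool) (m : ℕ) :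
    P.dist ν (m + 1) = Matrix.vecMul (P.dist ν m) (P.stepM ν m) := by
  funext v'
  simp only [KPOBDD.dist, KPOBDD.stepM]
  split_ifs with h
  · simp [Matrix.vecMul, dotProduct]
  · simp

lemma dist_add {n k w : ℕ} (P : KPOBDD n k w) (ν : Fin n → Bool) (a l : ℕ) :
    P.dist ν (a + l) = Matrix.vecMul (P.dist ν a) (P.blk ν a l) := by
  induction l with
  | zero => simp [KPOBDD.blk]
  | succ l ih => rw [← add_assoc, dist_succ, ih, Matrix.vecMul_vecMul]; rfl

lemma blk_congr {n k w : ℕ} (P : KPOBDD n k w) (ν ν' : Fin n → Bool) (a l : ℕ)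
    (h : ∀ j, j < l → ∀ hm : a + j < k * n,
      ν (varIdx k P.order ⟨a + j, hm⟩) = ν' (varIdx k P.order ⟨a + j, hm⟩)) :
    P.blk ν a l = P.blk ν' a l := by
  induction l with
  | zero => rfl
  | succ l ih =>
    have e : P.stepM ν (a + l) = P.stepM ν' (a + l) := by
      unfold KPOBDD.stepM
      split_ifs with hm
      · rw [h l (Nat.lt_succ_self l) hm]
      · rfl
    simp only [KPOBDD.blk]
    rw [ih (fun j hj => h j (by omega)), e]

lemma dist_nonneg' {n k w : ℕ} (P : KPOBDD n k w) (ν : Fin n → Bool) (m : ℕ) (v : Fin w) :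
    0 ≤ P.dist ν m v := by
  induction m generalizing v with
  | zero => simp only [KPOBDD.dist]; split_ifs <;> norm_num
  | succ m ih =>
    rw [dist_succ]
    simp only [Matrix.vecMul, dotProduct]
    exact Finset.sum_nonneg fun x _ => mul_nonneg (ih x) ((stepM_stoch P ν m).1 _ _)

lemma dist_sum {n k w : ℕ} (P : KPOBDD n k w) (ν : Fin n → Bool) (m : ℕ) :
    ∑ v, P.dist ν m v = 1 := by
  induction m with
  | zero => simp [KPOBDD.dist]
  | succ m ih =>
    rw [dist_succ]
    simp only [Matrix.vecMul, dotProduct]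
    rw [Finset.sum_comm]
    simp only [← Finset.mul_sum, (stepM_stoch P ν m).2, mul_one, ih]

lemma vecMul_close {w : ℕ} (p q : Fin w → ℝ) (M N : Matrix (Fin w) (Fin w) ℝ) (E : ℝ)
    (hM : IsStoch M) (hq : ∀ v, 0 ≤ q v) (hq1 : ∑ v, q v = 1)
    (hMN : ∀ i, ∑ j, |M i j - N i j| ≤ E) :
    ∑ v, |Matrix.vecMul p M v - Matrix.vecMul q N v| ≤ (∑ v, |p v - q v|) + E := by
  have h1 : ∀ v, |Matrix.vecMul p M v - Matrix.vecMul q N v| ≤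
      ∑ i, (|p i - q i| * M i v + q i * |M i v - N i v|) := by
    intro v
    simp only [Matrix.vecMul, dotProduct]
    rw [← Finset.sum_sub_distrib]
    refine (Finset.abs_sum_le_sum_abs _ _).trans (Finset.sum_le_sum fun i _ => ?_)
    have : p i * M i v - q i * N i v = (p i - q i) * M i v + q i * (M i v - N i v) := by ring
    rw [this]
    refine (abs_add_le _ _).trans ?_
    rw [abs_mul, abs_mul, abs_of_nonneg (hM.1 i v), abs_of_nonneg (hq i)]
  refine (Finset.sum_le_sum fun v _ => h1 v).trans ?_
  rw [Finset.sum_comm]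
  simp only [Finset.sum_add_distrib, ← Finset.mul_sum, hM.2, mul_one]
  gcongr
  calc ∑ i, q i * ∑ j, |M i j - N i j| ≤ ∑ i, q i * E :=
        Finset.sum_le_sum fun i _ => mul_le_mul_of_nonneg_left (hMN i) (hq i)
    _ = E := by rw [← Finset.sum_mul, hq1, one_mul]

/-- rounding class -/
noncomputable def cls (s η x : ℝ) : ℕ := ⌊Real.log (max x s / s) / η⌋₊

lemma cls_le {s η x : ℝ} (hs : 0 < s) (hs1 : s ≤ 1) (hη : 0 < η) (hx : x ≤ 1) :
    cls s η x ≤ ⌊Real.log (1 / s) / η⌋₊ := by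
  unfold cls
  have : 0 < max x s := lt_max_of_lt_right hs
  have : max x s ≤ 1 := max_le hx hs1
  gcongr

lemma cls_half {s η x y : ℝ} (hs : 0 < s) (hη : 0 < η) (hη1 : η ≤ 1) (hy : 0 ≤ y)
    (h : cls s η x = cls s η y) : x - y ≤ 2 * η * y + 3 * s := by
  have hX : 0 < max x s := lt_max_of_lt_right hs
  have hY : 0 < max y s := lt_max_of_lt_right hs
  have hy0 : 0 ≤ Real.log (max y s / s) / η := by
    apply div_nonneg _ hη.le
    apply Real.log_nonneg
    rw [le_div_iff₀ hs]; simp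
  have h1 : Real.log (max x s / s) / η < Real.log (max y s / s) / η + 1 := by
    calc _ < (cls s η x : ℝ) + 1 := Nat.lt_floor_add_one _
      _ = (cls s η y : ℝ) + 1 := by rw [h]
      _ ≤ _ := by gcongr; exact Nat.floor_le hy0
  rw [Real.log_div hX.ne' hs.ne', Real.log_div hY.ne' hs.ne', div_add_one hη.ne',
    div_lt_div_iff_of_pos_right hη] at h1
  have h2 : Real.log (max x s) ≤ Real.log (max y s) + η := by linarith
  have h3 : max x s ≤ max y s * Real.exp η := by
    have h := Real.exp_le_exp.2 h2
    rwa [Real.exp_add, Real.exp_log hX, Real.exp_log hY] at h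
  have h4 : Real.exp η ≤ 1 + 2 * η := by
    have := Real.abs_exp_sub_one_le (x := η) (by rw [abs_of_pos hη]; exact hη1)
    rw [abs_of_pos hη] at this
    linarith [le_abs_self (Real.exp η - 1)]
  have h5 : max y s ≤ y + s := max_le (by linarith) (by linarith)
  have h6 : x ≤ (y + s) * (1 + 2 * η) :=
    (le_max_left x s).trans (h3.trans (mul_le_mul h5 h4 (Real.exp_pos _).le (by linarith)))
  nlinarith

lemma cls_close {s η x y : ℝ} (hs : 0 < s) (hη : 0 < η) (hη1 : η ≤ 1) (hx : 0 ≤ x) (hy : 0 ≤ y)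
    (h : cls s η x = cls s η y) : |x - y| ≤ 2 * η * (x + y) + 3 * s := by
  have h1 := cls_half hs hη hη1 hy h
  have h2 := cls_half hs hη hη1 hx h.symm
  have := mul_nonneg hη.le hx
  have := mul_nonneg hη.le hy
  rw [abs_le]; constructor <;> nlinarith

lemma card_image_le_of_factor {α β γ : Type*} [Fintype α] [DecidableEq β] [Fintype γ]
    (g : α → β) (c : α → γ) (h : ∀ a b, c a = c b → g a = g b) :
    (Finset.univ.image g).card ≤ Fintype.card γ := by
  classical
  have key : ∀ b : (Finset.univ.image g), ∃ a, g a = b.1 := fun b => by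
    obtain ⟨a, -, ha⟩ := Finset.mem_image.1 b.2
    exact ⟨a, ha⟩
  choose r hr using key
  rw [← Fintype.card_coe]
  apply Fintype.card_le_of_injective (fun b => c (r b))
  intro b b' hb
  apply Subtype.ext
  rw [← hr b, ← hr b']
  exact h _ _ hb

lemma varIdx_symm {n : ℕ} (k : ℕ) (θ : Equiv.Perm (Fin n)) (m : Fin (k * n)) :
    ((θ.symm (varIdx k θ m) : Fin n) : ℕ) = m.val % n := by
  simp [varIdx]

lemma NsubA_bound {n k w : ℕ} (δ s η : ℝ) (f : (Fin n → Bool) → Bool)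
    (P : KPOBDD n k w) (hP : P.ComputesBE δ f) (hs : 0 < s) (hs1 : s ≤ 1) (hη : 0 < η)
    (hη1 : η ≤ 1) (hE : k * (4 * η + 3 * s * w) ≤ 2 * δ) (u : ℕ) (hu : u ≤ n) :
    NsubA f (Finset.univ.filter fun i : Fin n => ((P.order.symm i : Fin n) : ℕ) < u) ≤
      (⌊Real.log (1 / s) / η⌋₊ + 1) ^ (k * w ^ 2) := by
  set A := Finset.univ.filter fun i : Fin n => ((P.order.symm i : Fin n) : ℕ) < u with hA
  set K := ⌊Real.log (1 / s) / η⌋₊ + 1 with hK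
  set M : ({i : Fin n // i ∈ A} → Bool) → ℕ → Matrix (Fin w) (Fin w) ℝ :=
    fun σ i => P.blk (mergeAssign A σ (fun _ => false)) (i * n) u with hM
  have hent : ∀ σ i a b, M σ i a b ≤ 1 := fun σ i a b => by
    have hst := blk_stoch P (mergeAssign A σ (fun _ => false)) (i * n) u
    rw [← hst.2 a]
    exact Finset.single_le_sum (f := fun b => M σ i a b) (fun j _ => hst.1 a j) (Finset.mem_univ b)
  let c : ({i : Fin n // i ∈ A} → Bool) → (Fin k → Fin w → Fin w → Fin K) :=
    fun σ i a b => ⟨cls s η (M σ i a b), by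
      rw [hK]; exact Nat.lt_succ_of_le (cls_le hs hs1 hη (hent σ i a b))⟩
  have hcard : Fintype.card (Fin k → Fin w → Fin w → Fin K) = K ^ (k * w ^ 2) := by
    simp only [Fintype.card_pi, Fintype.card_fin, Finset.prod_const, Finset.card_univ]
    rw [← pow_mul, ← pow_mul]; ring_nf
  rw [← hcard]
  apply card_image_le_of_factor _ c
  intro σ σ' hc
  funext γ
  -- A-blocks depend on σ only
  have hAblk : ∀ τ i, P.blk (mergeAssign A τ γ) (i * n) u = M τ i := by
    intro τ i
    apply blk_congr
    intro j hj hm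
    have hmem : varIdx k P.order ⟨i * n + j, hm⟩ ∈ A := by
      rw [hA, Finset.mem_filter]
      refine ⟨Finset.mem_univ _, ?_⟩
      rw [varIdx_symm, Nat.mul_add_mod', Nat.mod_eq_of_lt (by omega)]
      exact hj
    simp [mergeAssign, hmem]
  have hBblk : ∀ i, P.blk (mergeAssign A σ γ) (i * n + u) (n - u) =
      P.blk (mergeAssign A σ' γ) (i * n + u) (n - u) := by
    intro i
    apply blk_congr
    intro j hj hm
    have hmem : varIdx k P.order ⟨i * n + u + j, hm⟩ ∉ A := by
      rw [hA, Finset.mem_filter]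
      rintro ⟨-, h⟩
      rw [varIdx_symm] at h
      simp only [add_assoc] at h
      rw [Nat.mul_add_mod', Nat.mod_eq_of_lt (by omega)] at h
      omega
    simp [mergeAssign, hmem]
  set ν := mergeAssign A σ γ
  set ν' := mergeAssign A σ' γ
  have hD : ∀ i, i ≤ k → ∑ v, |P.dist ν (i * n) v - P.dist ν' (i * n) v| ≤
      i * (4 * η + 3 * s * w) := by
    intro i
    induction i with
    | zero => intro _; simp [KPOBDD.dist]
    | succ i ih =>
      intro hi
      have ih' := ih (by omega)
      have e : (i + 1) * n = i * n + u + (n - u) := by rw [add_mul]; omega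
      have h1 : ∑ v, |P.dist ν (i * n + u) v - P.dist ν' (i * n + u) v| ≤
          ∑ v, |P.dist ν (i * n) v - P.dist ν' (i * n) v| + (4 * η + 3 * s * w) := by
        rw [dist_add, dist_add]
        apply vecMul_close _ _ _ _ _ (blk_stoch P ν _ _) (dist_nonneg' P ν' _) (dist_sum P ν' _)
        intro a
        have s1 := blk_stoch P ν (i * n) u
        have s2 := blk_stoch P ν' (i * n) u
        calc ∑ b, |P.blk ν (i * n) u a b - P.blk ν' (i * n) u a b|
            ≤ ∑ b, (2 * η * (P.blk ν (i * n) u a b + P.blk ν' (i * n) u a b) + 3 * s) := by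
              refine Finset.sum_le_sum fun b _ => cls_close hs hη hη1 (s1.1 _ _) (s2.1 _ _) ?_
              rw [hAblk, hAblk]
              have := congrFun (congrFun (congrFun hc ⟨i, by omega⟩) a) b
              exact congrArg Fin.val this
          _ = 4 * η + 3 * s * w := by
              rw [Finset.sum_add_distrib, ← Finset.mul_sum, Finset.sum_add_distrib, s1.2, s2.2]
              simp; ring
      have h2 : ∑ v, |P.dist ν ((i + 1) * n) v - P.dist ν' ((i + 1) * n) v| ≤
          ∑ v, |P.dist ν (i * n + u) v - P.dist ν' (i * n + u) v| + 0 := by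
        rw [e, dist_add P ν, dist_add P ν', ← hBblk]
        apply vecMul_close _ _ _ _ _ (blk_stoch P ν _ _) (dist_nonneg' P ν' _) (dist_sum P ν' _)
        intro a; simp
      push_cast
      linarith
  have hacc : |P.acceptProb ν - P.acceptProb ν'| ≤ 2 * δ := by
    unfold KPOBDD.acceptProb
    rw [← Finset.sum_sub_distrib]
    refine (Finset.abs_sum_le_sum_abs _ _).trans (le_trans ?_ ((hD k le_rfl).trans hE))
    exact Finset.sum_le_sum_of_subset_of_nonneg (Finset.subset_univ _) fun _ _ _ => abs_nonneg _
  rw [abs_le] at hacc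
  obtain ⟨p1, p2⟩ := hP ν
  obtain ⟨q1, q2⟩ := hP ν'
  show f ν = f ν'
  rcases h1 : f ν with _ | _ <;> rcases h2 : f ν' with _ | _
  · rfl
  · have := p2 h1; have := q1 h2; linarith [hacc.1]
  · have := p1 h1; have := q2 h2; linarith [hacc.2]
  · rfl

/-- **Subfunction bound for bounded-error probabilistic `k`-OBDDs.** For every
`0 < δ < 1/2` there are constants `C₁, C₂ > 0` such that whenever `f : {0,1}^n → {0,1}`
(`n ≥ 2`) is computed with bounded error `δ` by a `k`-POBDD of width `w` (`k ≥ 1`,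
`w ≥ 2`), we have `N(f) ≤ (C₁·k·(C₂ + log₂ w + log₂ k))^((k+1)·w²)`. -/
theorem kpobdd_subfunction_bound (δ : ℝ) (hδ0 : 0 < δ) (hδ : δ < 1 / 2) :
    ∃ C₁ C₂ : ℝ, 0 < C₁ ∧ 0 < C₂ ∧
      ∀ (n k w : ℕ) (f : (Fin n → Bool) → Bool), 2 ≤ n → 1 ≤ k → 2 ≤ w →
        ∀ P : KPOBDD n k w, P.ComputesBE δ f →
          (Nmin f : ℝ) ≤
            (C₁ * k * (C₂ + Real.logb 2 w + Real.logb 2 k)) ^ ((k + 1) * w ^ 2) := by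
  have hl3 : 0 < Real.logb 2 (3 / δ) := by
    apply Real.logb_pos (by norm_num)
    rw [lt_div_iff₀ hδ0]; linarith
  refine ⟨4 / δ, Real.logb 2 (3 / δ) + 1, by positivity, by linarith, ?_⟩
  intro n k w f hn hk hw P hP
  have hk1 : (1 : ℝ) ≤ k := by exact_mod_cast hk
  have hw1 : (2 : ℝ) ≤ w := by exact_mod_cast hw
  have hk0 : (0 : ℝ) < k := by linarith
  have hw0 : (0 : ℝ) < w := by linarith
  set s : ℝ := δ / (3 * w * k) with hs
  set η : ℝ := δ / (4 * k) with hη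
  have hs0 : 0 < s := by positivity
  have hη0 : 0 < η := by positivity
  have hs1 : s ≤ 1 := by
    rw [hs, div_le_one (by positivity)]; nlinarith
  have hη1 : η ≤ 1 := by
    rw [hη, div_le_one (by positivity)]; nlinarith
  have hE : k * (4 * η + 3 * s * w) ≤ 2 * δ := by
    apply le_of_eq; rw [hs, hη]; field_simp; ring
  have hN : Nmin f ≤ (⌊Real.log (1 / s) / η⌋₊ + 1) ^ (k * w ^ 2) := by
    refine (Finset.inf'_le _ (Finset.mem_univ P.order)).trans ?_
    refine Finset.sup_le fun u hu => ?_
    rw [Finset.mem_Icc] at hu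
    exact NsubA_bound δ s η f P hP hs0 hs1 hη0 hη1 hE u (by omega)
  have hlk : 0 ≤ Real.logb 2 k := Real.logb_nonneg (by norm_num) hk1
  have hlw : 0 ≤ Real.logb 2 w := Real.logb_nonneg (by norm_num) (by linarith)
  have hlog : Real.log (1 / s) ≤ Real.logb 2 (3 / δ) + Real.logb 2 w + Real.logb 2 k := by
    have e : 1 / s = 3 / δ * w * k := by rw [hs]; field_simp
    have e2 : Real.logb 2 (3 / δ) + Real.logb 2 w + Real.logb 2 k = Real.logb 2 (1 / s) := by
      rw [e, Real.logb_mul (by positivity) (by positivity),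
        Real.logb_mul (by positivity) (by positivity)]
    rw [e2, Real.logb, le_div_iff₀ (Real.log_pos (by norm_num))]
    have h0 : 0 ≤ Real.log (1 / s) := Real.log_nonneg (by rw [le_div_iff₀ hs0]; linarith)
    have h2 : Real.log 2 ≤ 1 := by linarith [Real.log_two_lt_d9]
    nlinarith
  have hl0 : 0 ≤ Real.log (1 / s) := Real.log_nonneg (by rw [le_div_iff₀ hs0]; linarith)
  have h4 : 1 ≤ 4 / δ * k := by
    have : 1 ≤ 4 / δ := by rw [le_div_iff₀ hδ0]; linarith
    nlinarith
  have hbase : ((⌊Real.log (1 / s) / η⌋₊ + 1 : ℕ) : ℝ) ≤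
      4 / δ * k * (Real.logb 2 (3 / δ) + 1 + Real.logb 2 w + Real.logb 2 k) := by
    push_cast
    have h1 : (⌊Real.log (1 / s) / η⌋₊ : ℝ) ≤ Real.log (1 / s) / η :=
      Nat.floor_le (div_nonneg hl0 hη0.le)
    have h2 : Real.log (1 / s) / η = 4 / δ * k * Real.log (1 / s) := by rw [hη]; field_simp
    have h3 := mul_le_mul_of_nonneg_left hlog (le_trans zero_le_one h4)
    nlinarith
  calc (Nmin f : ℝ) ≤ ((⌊Real.log (1 / s) / η⌋₊ + 1 : ℕ) : ℝ) ^ (k * w ^ 2) := by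
        exact_mod_cast hN
    _ ≤ ((⌊Real.log (1 / s) / η⌋₊ + 1 : ℕ) : ℝ) ^ ((k + 1) * w ^ 2) := by
        apply pow_le_pow_right₀
        · exact_mod_cast Nat.le_add_left 1 _
        · gcongr; omega
    _ ≤ _ := pow_le_pow_left₀ (by positivity) hbase _
end

section
/- β-closeness of bilinear forms of matrix powers (Lemma bClosenessOfAcceptPr, general form): Let β ≥ 1 be real, r ≥ 1 and z ≥ 0 be integers, let p and p' be vectors in ℝ^r with nonnegative entries that are β-close (entrywise), let M and M' be r×r matrices with nonnegative entries that are β-close (entrywise), and let q ∈ ℝ^r have nonnegative entries. Then the two nonnegative reals pᵀ·M^z·q and p'ᵀ·(M')^z·q are β^{z+1}-close. -/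
open Matrix

/-- Two nonnegative reals `p` and `p'` are `β`-close (for `β ≥ 1`) if either `p = p' = 0`,
or `p > 0`, `p' > 0` and `β⁻¹ ≤ p / p' ≤ β`. -/
def BClose (β p p' : ℝ) : Prop :=
  (p = 0 ∧ p' = 0) ∨ (0 < p ∧ 0 < p' ∧ β⁻¹ ≤ p / p' ∧ p / p' ≤ β)

def CC (β a b : ℝ) : Prop := 0 ≤ a ∧ 0 ≤ b ∧ a ≤ β * b ∧ b ≤ β * a

theorem bclose_iff_CC (β a b : ℝ) (hβ : 0 < β) : BClose β a b ↔ CC β a b := by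
  unfold BClose CC
  constructor
  · rintro (⟨rfl, rfl⟩ | ⟨ha, hb, h1, h2⟩)
    · simp
    · rw [div_le_iff₀ hb] at h2
      rw [le_div_iff₀ hb, inv_mul_le_iff₀ hβ] at h1
      exact ⟨ha.le, hb.le, h2, h1⟩
  · rintro ⟨ha, hb, h1, h2⟩
    rcases ha.eq_or_lt with h | h
    · left
      subst h
      exact ⟨rfl, le_antisymm (by simpa using h2) hb⟩
    · right
      have hb' : 0 < b := by
        rcases hb.eq_or_lt with h' | h'
        · subst h'
          simp at h1
          linarith
        · exact h'
      refine ⟨h, hb', ?_, ?_⟩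
      · rw [le_div_iff₀ hb', inv_mul_le_iff₀ hβ]; exact h2
      · rw [div_le_iff₀ hb']; exact h1

theorem CC_mul {β γ a b c d : ℝ} (hβ : 0 ≤ β) (h : CC β a b) (h' : CC γ c d) :
    CC (β * γ) (a * c) (b * d) := by
  obtain ⟨h1, h2, h3, h4⟩ := h
  obtain ⟨g1, g2, g3, g4⟩ := h'
  refine ⟨mul_nonneg h1 g1, mul_nonneg h2 g2, ?_, ?_⟩
  · calc a * c ≤ (β * b) * (γ * d) := mul_le_mul h3 g3 g1 (mul_nonneg hβ h2)
      _ = _ := by ring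
  · calc b * d ≤ (β * a) * (γ * c) := mul_le_mul h4 g4 g2 (mul_nonneg hβ h1)
      _ = _ := by ring

theorem CC_dot {r : ℕ} {β γ : ℝ} (hβ : 0 ≤ β) {a b c d : Fin r → ℝ}
    (h : ∀ i, CC β (a i) (b i)) (h' : ∀ i, CC γ (c i) (d i)) :
    CC (β * γ) (a ⬝ᵥ c) (b ⬝ᵥ d) := by
  have H := fun i => CC_mul hβ (h i) (h' i)
  unfold dotProduct CC
  rw [Finset.mul_sum, Finset.mul_sum]
  exact ⟨Finset.sum_nonneg fun i _ => (H i).1, Finset.sum_nonneg fun i _ => (H i).2.1,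
    Finset.sum_le_sum fun i _ => (H i).2.2.1, Finset.sum_le_sum fun i _ => (H i).2.2.2⟩

theorem CC_pow {r : ℕ} {β : ℝ} (hβ : 0 ≤ β) {M M' : Matrix (Fin r) (Fin r) ℝ}
    (h : ∀ i j, CC β (M i j) (M' i j)) (q : Fin r → ℝ) (hq : ∀ i, 0 ≤ q i) (z : ℕ) :
    ∀ i, CC (β ^ z) ((M ^ z).mulVec q i) ((M' ^ z).mulVec q i) := by
  induction z with
  | zero => intro i; simp [CC, hq i]
  | succ n ih =>
    intro i
    rw [pow_succ' M, pow_succ' M', ← Matrix.mulVec_mulVec, ← Matrix.mulVec_mulVec, pow_succ']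
    exact CC_dot hβ (h i) ih

/-- **β-closeness of bilinear forms of matrix powers.** If the nonnegative vectors `p, p'`
are entrywise `β`-close, the nonnegative matrices `M, M'` are entrywise `β`-close
(`β ≥ 1`, `r ≥ 1`, `z ≥ 0`), and `q` is a nonnegative vector, then the nonnegative reals
`pᵀ·M^z·q` and `p'ᵀ·(M')^z·q` are `β^(z+1)`-close. -/
theorem bclose_bilinear_pow (β : ℝ) (hβ : 1 ≤ β) (r : ℕ) (hr : 1 ≤ r) (z : ℕ)
    (p p' : Fin r → ℝ) (hp : ∀ i, 0 ≤ p i) (hp' : ∀ i, 0 ≤ p' i)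
    (hpc : ∀ i, BClose β (p i) (p' i))
    (M M' : Matrix (Fin r) (Fin r) ℝ)
    (hM : ∀ i j, 0 ≤ M i j) (hM' : ∀ i j, 0 ≤ M' i j)
    (hMc : ∀ i j, BClose β (M i j) (M' i j))
    (q : Fin r → ℝ) (hq : ∀ i, 0 ≤ q i) :
    BClose (β ^ (z + 1)) (p ⬝ᵥ (M ^ z).mulVec q) (p' ⬝ᵥ (M' ^ z).mulVec q) := by
  have h0 : 0 < β := by linarith
  rw [bclose_iff_CC _ _ _ (pow_pos h0 _), pow_succ']
  exact CC_dot h0.le (fun i => (bclose_iff_CC _ _ _ h0).1 (hpc i))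
    (CC_pow h0.le (fun i j => (bclose_iff_CC _ _ _ h0).1 (hMc i j)) q hq z)
end

section
/- Effect of zeroing small entries of a substochastic matrix (abstract core of Lemma cpp_small_elems): Let N ≥ 1 and m ≥ 0 be integers, let ε ≥ 0 be real, and let M be an N×N real matrix with nonnegative entries whose every row sum is at most 1. Let M' be the matrix obtained from M by replacing every entry that is strictly less than ε by 0. Let p ∈ ℝ^N have nonnegative entries with Σ_a p_a ≤ 1 and let q ∈ ℝ^N have entries in [0,1]. Then 0 ≤ pᵀ·M^m·q − pᵀ·(M')^m·q ≤ m·N²·ε. -/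
open Matrix

/-- **Effect of zeroing small entries of a substochastic matrix.** Let `M` be an `N×N`
matrix with nonnegative entries and row sums at most `1`, and let `M'` be obtained from
`M` by replacing every entry strictly smaller than `ε ≥ 0` by `0`. Then for every
nonnegative vector `p` with `Σ p ≤ 1` and every vector `q` with entries in `[0,1]`,
`0 ≤ pᵀ·M^m·q − pᵀ·(M')^m·q ≤ m·N²·ε`. -/
theorem zeroing_small_entries (N m : ℕ) (hN : 1 ≤ N) (ε : ℝ) (hε : 0 ≤ ε)
    (M M' : Matrix (Fin N) (Fin N) ℝ)
    (hM0 : ∀ i j, 0 ≤ M i j) (hrow : ∀ i, ∑ j, M i j ≤ 1)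
    (hM' : ∀ i j, M' i j = if M i j < ε then 0 else M i j)
    (p : Fin N → ℝ) (hp0 : ∀ i, 0 ≤ p i) (hp1 : ∑ i, p i ≤ 1)
    (q : Fin N → ℝ) (hq0 : ∀ i, 0 ≤ q i) (hq1 : ∀ i, q i ≤ 1) :
    0 ≤ p ⬝ᵥ (M ^ m).mulVec q - p ⬝ᵥ (M' ^ m).mulVec q ∧
    p ⬝ᵥ (M ^ m).mulVec q - p ⬝ᵥ (M' ^ m).mulVec q ≤ (m : ℝ) * (N : ℝ) ^ 2 * ε := by
  have hd0 : ∀ i j, 0 ≤ M' i j := by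
    intro i j; rw [hM']; split_ifs <;> simp [hM0]
  have hd1 : ∀ i j, M' i j ≤ M i j := by
    intro i j; rw [hM']; split_ifs <;> simp [hM0]
  have hd2 : ∀ i j, M i j - M' i j ≤ ε := by
    intro i j; rw [hM']; split_ifs <;> linarith
  have key : ∀ k : ℕ, ∀ i, 0 ≤ (M' ^ k).mulVec q i ∧
      (M' ^ k).mulVec q i ≤ (M ^ k).mulVec q i ∧ (M ^ k).mulVec q i ≤ 1 ∧
      (M ^ k).mulVec q i - (M' ^ k).mulVec q i ≤ (k : ℝ) * N * ε := by
    intro k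
    induction k with
    | zero => intro i; simp [hq0, hq1]
    | succ k ih =>
      intro i
      rw [pow_succ' M, pow_succ' M', ← Matrix.mulVec_mulVec, ← Matrix.mulVec_mulVec]
      generalize (M ^ k).mulVec q = u at ih ⊢
      generalize (M' ^ k).mulVec q = v at ih ⊢
      simp only [Matrix.mulVec, dotProduct]
      have hc : (0 : ℝ) ≤ (k : ℝ) * N * ε := by positivity
      refine ⟨Finset.sum_nonneg fun j _ => mul_nonneg (hd0 i j) (ih j).1,
        Finset.sum_le_sum fun j _ => mul_le_mul (hd1 i j) (ih j).2.1 (ih j).1 (hM0 i j),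
        (Finset.sum_le_sum fun j _ =>
          mul_le_of_le_one_right (hM0 i j) (ih j).2.2.1).trans (hrow i), ?_⟩
      rw [← Finset.sum_sub_distrib]
      calc ∑ j, (M i j * u j - M' i j * v j)
          ≤ ∑ j, (M i j * ((k : ℝ) * N * ε) + ε) := by
            refine Finset.sum_le_sum fun j _ => ?_
            obtain ⟨h0, h1, h2, h3⟩ := ih j
            have a := mul_le_mul_of_nonneg_left h3 (hM0 i j)
            have b : (M i j - M' i j) * v j ≤ M i j - M' i j :=
              mul_le_of_le_one_right (sub_nonneg.2 (hd1 i j)) (h1.trans h2)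
            have c := hd2 i j
            linarith
        _ = (∑ j, M i j) * ((k : ℝ) * N * ε) + N * ε := by
            rw [Finset.sum_add_distrib, Finset.sum_mul]; simp
        _ ≤ 1 * ((k : ℝ) * N * ε) + N * ε := by
            have := mul_le_mul_of_nonneg_right (hrow i) hc
            linarith
        _ = ((k + 1 : ℕ) : ℝ) * N * ε := by push_cast; ring
  have hc : (0 : ℝ) ≤ (m : ℝ) * N * ε := by positivity
  simp only [dotProduct]
  rw [← Finset.sum_sub_distrib]
  constructor
  · refine Finset.sum_nonneg fun i _ => ?_
    rw [← mul_sub]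
    exact mul_nonneg (hp0 i) (sub_nonneg.2 (key m i).2.1)
  · calc _ ≤ ∑ i, p i * ((m : ℝ) * N * ε) := by
            refine Finset.sum_le_sum fun i _ => ?_
            rw [← mul_sub]
            exact mul_le_mul_of_nonneg_left (key m i).2.2.2 (hp0 i)
      _ = (∑ i, p i) * ((m : ℝ) * N * ε) := by rw [Finset.sum_mul]
      _ ≤ (m : ℝ) * N * ε := mul_le_of_le_one_left hc hp1
      _ ≤ (m : ℝ) * (N : ℝ) ^ 2 * ε := by
            have hN' : (1 : ℝ) ≤ N := by exact_mod_cast hN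
            have : (N : ℝ) ≤ (N : ℝ) ^ 2 := by nlinarith
            gcongr
end

section
/- Rate inequality for the deterministic hierarchy (from the proof of Lemma peq2_kobdd-small): Let k > 0 and δ > 0 be reals and let v ≥ 2 and w ≥ 2 be integers. If δ·w·log₂ w > 48·v·log₂ v, then w^{k·w/48} > v^{(k/δ − 1)·v + 1}, where both sides are real powers (rpow) with positive real bases and real exponents. -/
/-- **Rate inequality for the deterministic hierarchy.** For reals `k, δ > 0` and integers
`v, w ≥ 2`, if `δ·w·log₂ w > 48·v·log₂ v` then `w^(k·w/48) > v^((k/δ − 1)·v + 1)`, where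
both sides are real powers (rpow) with positive real bases and real exponents. -/
theorem det_rate_inequality (k δ : ℝ) (v w : ℕ) (hk : 0 < k) (hδ : 0 < δ)
    (hv : 2 ≤ v) (hw : 2 ≤ w)
    (h : δ * (w : ℝ) * Real.logb 2 w > 48 * (v : ℝ) * Real.logb 2 v) :
    (w : ℝ) ^ ((k * (w : ℝ)) / 48) > (v : ℝ) ^ ((k / δ - 1) * (v : ℝ) + 1) := by
  have hv' : (2 : ℝ) ≤ v := by exact_mod_cast hv
  have hw' : (2 : ℝ) ≤ w := by exact_mod_cast hw
  have hv0 : (0 : ℝ) < v := by linarith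
  have hw0 : (0 : ℝ) < w := by linarith
  have hlv : 0 < Real.log v := Real.log_pos (by linarith)
  have hl2 : 0 < Real.log 2 := Real.log_pos (by norm_num)
  have h1 : 48 * (v : ℝ) * Real.log v < δ * (w : ℝ) * Real.log w := by
    simp only [Real.logb, gt_iff_lt, ← mul_div_assoc] at h
    exact (div_lt_div_iff_of_pos_right hl2).mp h
  have h2 : k / δ / 48 * (48 * (v : ℝ) * Real.log v)
      < k / δ / 48 * (δ * (w : ℝ) * Real.log w) :=
    mul_lt_mul_of_pos_left h1 (by positivity)
  have e1 : k / δ / 48 * (δ * (w : ℝ) * Real.log w) = Real.log w * (k * w / 48) := by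
    field_simp
  have h3 : 0 ≤ ((v : ℝ) - 1) * Real.log v := mul_nonneg (by linarith) hlv.le
  rw [gt_iff_lt, Real.rpow_def_of_pos hv0, Real.rpow_def_of_pos hw0, Real.exp_lt_exp, ← e1]
  refine lt_of_le_of_lt ?_ h2
  nlinarith [h3]
end
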